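/- Let Γ be a connected simple graph on [n] with n ≥ 3. Then the dimension of Splines(Γ)^1 as a ℂ-vector space equals D_Γ := 2n − 1 − Σ_{j cut vertex of Γ} c(j) + n·(|LB_Γ| + |{B ∈ IB_Γ : |B| > 2}| − 1) + Σ_{s internal cut edge of Γ} C(n, |V(G_s)|), where C(n,m) denotes the binomial coefficient. -/

import Mathlib

open MvPolynomial

/-- A spline on a simple graph `Γ` on `[n]`. -/
def IsSpline {n : ℕ} (Γ : SimpleGraph (Fin n))
    (ρ : Equiv.Perm (Fin n) → MvPolynomial (Fin n) ℂ) : Prop :=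
  ∀ (w : Equiv.Perm (Fin n)) (i j : Fin n), Γ.Adj i j →
    ρ w - ρ (w * Equiv.swap i j) ∈
      Ideal.span {(X (w i) - X (w j) : MvPolynomial (Fin n) ℂ)}

/-- The `ℂ`-vector space `Splines(Γ)¹` of splines all of whose values are homogeneous of
degree `1` (or zero). -/
noncomputable def linSplines {n : ℕ} (Γ : SimpleGraph (Fin n)) :
    Submodule ℂ (Equiv.Perm (Fin n) → MvPolynomial (Fin n) ℂ) where
  carrier := {ρ | IsSpline Γ ρ ∧ ∀ w, (ρ w).IsHomogeneous 1}
  zero_mem' := by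
    refine ⟨fun w i j h => ?_, fun w => ?_⟩
    · simp
    · simpa using MvPolynomial.isHomogeneous_zero (Fin n) ℂ 1
  add_mem' := by
    rintro a b ⟨ha1, ha2⟩ ⟨hb1, hb2⟩
    refine ⟨fun w i j h => ?_, fun w => (ha2 w).add (hb2 w)⟩
    have h := Ideal.add_mem _ (ha1 w i j h) (hb1 w i j h)
    simpa [add_sub_add_comm] using h
  smul_mem' := by
    rintro c ρ ⟨h1, h2⟩
    constructor
    · intro w i j h
      have hmem := h1 w i j h
      have h3 : (c • ρ) w - (c • ρ) (w * Equiv.swap i j)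
          = C c * (ρ w - ρ (w * Equiv.swap i j)) := by
        simp [MvPolynomial.smul_eq_C_mul, mul_sub]
      rw [h3]
      exact Ideal.mul_mem_left _ _ hmem
    · intro w
      have h4 : (c • ρ) w = C c * ρ w := by
        simp [MvPolynomial.smul_eq_C_mul]
      rw [h4]
      simpa using (MvPolynomial.isHomogeneous_C (Fin n) c).mul (h2 w)

/-- `j` is a cut vertex of `Γ`: the induced subgraph `Γ − j` is disconnected. -/
def IsCutVtx {n : ℕ} (Γ : SimpleGraph (Fin n)) (j : Fin n) : Prop :=
  ¬ (Γ.induce ({j}ᶜ : Set (Fin n))).Connected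

/-- `{i,j}` is a cut edge of `Γ`: deleting it disconnects the graph. -/
def IsCutEdge {n : ℕ} (Γ : SimpleGraph (Fin n)) (i j : Fin n) : Prop :=
  Γ.Adj i j ∧ ¬ (Γ.deleteEdges {s(i, j)}).Connected

/-- The graph obtained from `Γ` by deleting all edges incident to the vertex `j`. -/
def delVertexEdges {n : ℕ} (Γ : SimpleGraph (Fin n)) (j : Fin n) : SimpleGraph (Fin n) :=
  Γ.deleteEdges {e : Sym2 (Fin n) | j ∈ e}

/-- The number of connected components of `Γ − j` (components of the vertex-deleted graph,
i.e. reachability classes of vertices other than `j` after removing all edges at `j`). -/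
noncomputable def numComp {n : ℕ} (Γ : SimpleGraph (Fin n)) (j : Fin n) : ℕ :=
  {G : Set (Fin n) | ∃ v₀ : Fin n, v₀ ≠ j ∧
      G = {y | (delVertexEdges Γ j).Reachable v₀ y}}.ncard

/-- `B` is a biconnected vertex set: `|B| ≥ 2`, the induced subgraph on `B` is connected,
and it has no cut vertex. -/
def IsBiconn {n : ℕ} (Γ : SimpleGraph (Fin n)) (B : Set (Fin n)) : Prop :=
  2 ≤ B.ncard ∧ (Γ.induce B).Connected ∧
    ∀ b ∈ B, (Γ.induce (B \ {b})).Connected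

/-- `B` is a block of `Γ`: a maximal biconnected vertex set. -/
def IsBlock {n : ℕ} (Γ : SimpleGraph (Fin n)) (B : Set (Fin n)) : Prop :=
  IsBiconn Γ B ∧ ∀ B' : Set (Fin n), IsBiconn Γ B' → B ⊆ B' → B' = B

open Classical in
/-- The leaf blocks of `Γ`: blocks containing exactly one cut vertex (if `Γ` has no cut
vertex, there are none). -/
noncomputable def LeafBlocks {n : ℕ} (Γ : SimpleGraph (Fin n)) : Set (Set (Fin n)) :=
  if ∃ j, IsCutVtx Γ j then
    {B | IsBlock Γ B ∧ ({j ∈ B | IsCutVtx Γ j} : Set (Fin n)).ncard = 1}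
  else ∅

open Classical in
/-- The internal blocks of `Γ`: blocks containing at least two cut vertices (if `Γ` has no
cut vertex, the whole vertex set is the unique internal block). -/
noncomputable def InternalBlocks {n : ℕ} (Γ : SimpleGraph (Fin n)) : Set (Set (Fin n)) :=
  if ∃ j, IsCutVtx Γ j then
    {B | IsBlock Γ B ∧ 2 ≤ ({j ∈ B | IsCutVtx Γ j} : Set (Fin n)).ncard}
  else {Set.univ}

open Classical in
/-- The combinatorial invariant
`D_Γ = 2n − 1 − Σ_{j cut vertex} c(j) + n·(|LB_Γ| + |{B ∈ IB_Γ : |B| > 2}| − 1)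
      + Σ_{s internal cut edge} C(n, |V(G_s)|)`,
where `c(j) + 1` is the number of components of `Γ − j`, and for an internal cut edge
`s = {i,j}` (`i < j`), `G_s` is the component of the edge-deleted graph containing `i`. -/
noncomputable def Dinv {n : ℕ} (Γ : SimpleGraph (Fin n)) : ℤ :=
  2 * (n : ℤ) - 1
    - ∑ j ∈ Finset.univ.filter (fun j : Fin n => IsCutVtx Γ j), ((numComp Γ j : ℤ) - 1)
    + (n : ℤ) * (((LeafBlocks Γ).ncard : ℤ)
        + (({B ∈ InternalBlocks Γ | 2 < B.ncard} : Set (Set (Fin n))).ncard : ℤ) - 1)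
    + ∑ p ∈ Finset.univ.filter (fun p : Fin n × Fin n =>
        p.1 < p.2 ∧ IsCutEdge Γ p.1 p.2 ∧ IsCutVtx Γ p.1 ∧ IsCutVtx Γ p.2),
        ((n.choose ({y | (Γ.deleteEdges {s(p.1, p.2)}).Reachable p.1 y} :
            Set (Fin n)).ncard : ℤ))

namespace LinSpl

open Equiv

/-! ### Functions on permutations invariant under transpositions -/

/-- `F` is invariant under right multiplication by the transposition `(u v)`. -/
def Inv {n : ℕ} (F : Perm (Fin n) → ℂ) (u v : Fin n) : Prop :=
  ∀ w, F (w * swap u v) = F w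

lemma Inv.refl {n : ℕ} (F : Perm (Fin n) → ℂ) (u : Fin n) : Inv F u u := by
  intro w; simp [swap_self, ← Perm.one_def]

lemma Inv.symm {n : ℕ} {F : Perm (Fin n) → ℂ} {u v : Fin n} (h : Inv F u v) : Inv F v u := by
  intro w; rw [swap_comm]; exact h w

lemma Inv.trans {n : ℕ} {F : Perm (Fin n) → ℂ} {u v x : Fin n} (h : Inv F u v)
    (h' : Inv F v x) : Inv F u x := by
  intro w
  by_cases hux : u = x
  · subst hux; exact Inv.refl F u w
  by_cases huv : u = v
  · subst huv; exact h' w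
  by_cases hvx : v = x
  · subst hvx; exact h w
  have e : swap u x = swap u v * swap v x * swap u v := by
    rw [swap_comm u v, swap_comm v x, swap_mul_swap_mul_swap (Ne.symm hvx) (Ne.symm hux)]
  rw [e, ← mul_assoc, ← mul_assoc, h, h', h]

/-- An invariance criterion for arbitrary permutations. -/
lemma Inv.perm {n : ℕ} {F : Perm (Fin n) → ℂ} (σ : Perm (Fin n))
    (h : ∀ x, Inv F x (σ x)) (w : Perm (Fin n)) : F (w * σ) = F w := by
  induction hk : σ.support.card using Nat.strong_induction_on generalizing σ with
  | _ k ih =>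
    by_cases h1 : σ = 1
    · simp [h1]
    obtain ⟨x, hx⟩ : ∃ x, σ x ≠ x := by
      by_contra hcon
      push Not at hcon
      exact h1 (Perm.ext hcon)
    have hz : Inv F (σ⁻¹ x) x := by simpa using h (σ⁻¹ x)
    have e1 : F (w * σ) = F (w * (σ * swap x (σ⁻¹ x))) := by
      rw [← mul_assoc]; exact ((hz.symm) (w * σ)).symm
    rw [e1]
    refine ih _ ?_ (σ * swap x (σ⁻¹ x)) ?_ rfl
    · rw [← hk]
      apply Finset.card_lt_card
      constructor
      · intro y hy
        rw [Perm.mem_support] at hy ⊢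
        intro hy2
        apply hy
        have hyx : y ≠ x := fun h => hx (h ▸ hy2)
        have hyz : y ≠ σ⁻¹ x := by
          intro h
          apply hyx
          rw [← hy2, h]; simp
        rw [Perm.mul_apply, swap_apply_of_ne_of_ne hyx hyz, hy2]
      · intro hsub
        have := hsub (Perm.mem_support.2 hx)
        rw [Perm.mem_support] at this
        simp at this
    · intro y
      by_cases hyx : y = x
      · subst hyx
        have e2 : (σ * swap y (σ⁻¹ y)) y = y := by simp
        rw [e2]
        exact Inv.refl F y
      by_cases hyz : y = σ⁻¹ x
      · subst hyz
        simp only [Perm.mul_apply, swap_apply_right]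
        exact hz.trans (h x)
      · simp only [Perm.mul_apply, swap_apply_of_ne_of_ne hyx hyz]
        exact h y

/-- Invariance under reachability. -/
lemma Inv.of_reachable {n : ℕ} {F : Perm (Fin n) → ℂ} (H : SimpleGraph (Fin n))
    (h : ∀ u v, H.Adj u v → Inv F u v) {u v : Fin n} (huv : H.Reachable u v) : Inv F u v := by
  obtain ⟨p⟩ := huv
  induction p with
  | nil => exact Inv.refl F _
  | cons ha _ ih => exact (h _ _ ha).trans ih

lemma Inv.const {n : ℕ} {F : Perm (Fin n) → ℂ} {H : SimpleGraph (Fin n)} (hH : H.Connected)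
    (h : ∀ u v, H.Adj u v → Inv F u v) (w w' : Perm (Fin n)) : F w = F w' := by
  have := Inv.perm (F := F) (w⁻¹ * w')
    (fun x => Inv.of_reachable H h (hH.preconnected x _)) w
  rw [← this]; simp

/-! ### Coordinates for linear splines -/

/-- The space of coefficient families `b p w` (coefficient of `t_{w(p)}` in `ρ(w)`). -/
def ESub {n : ℕ} (Γ : SimpleGraph (Fin n)) : Submodule ℂ (Fin n → Perm (Fin n) → ℂ) where
  carrier := {b | (∀ p i j, Γ.Adj i j → p ≠ i → p ≠ j → Inv (b p) i j) ∧
    ∀ i j, Γ.Adj i j → ∀ w, b i (w * swap i j) + b j (w * swap i j) = b i w + b j w}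
  zero_mem' := by
    refine ⟨fun p i j _ _ _ w => by simp, fun i j _ w => by simp⟩
  add_mem' := by
    rintro a b ⟨ha, ha'⟩ ⟨hb, hb'⟩
    refine ⟨fun p i j h h1 h2 w => ?_, fun i j h w => ?_⟩
    · have := ha p i j h h1 h2 w
      have := hb p i j h h1 h2 w
      simp_all
    · have := ha' i j h w
      have := hb' i j h w
      simp only [Pi.add_apply]
      linear_combination ha' i j h w + hb' i j h w
  smul_mem' := by
    rintro c b ⟨hb, hb'⟩
    refine ⟨fun p i j h h1 h2 w => ?_, fun i j h w => ?_⟩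
    · have := hb p i j h h1 h2 w
      simp_all
    · simp only [Pi.smul_apply, smul_eq_mul]
      linear_combination c * hb' i j h w

/-- The linear form with given coefficients. -/
noncomputable def lf {n : ℕ} (c : Fin n → ℂ) : MvPolynomial (Fin n) ℂ := ∑ k, C (c k) * X k

lemma eval_lf {n : ℕ} (c v : Fin n → ℂ) : eval v (lf c) = ∑ k, c k * v k := by
  simp [lf]

lemma lf_sub {n : ℕ} (c d : Fin n → ℂ) : lf (fun k => c k - d k) = lf c - lf d := by
  simp [lf, sub_mul, Finset.sum_sub_distrib]

lemma lf_hom {n : ℕ} (c : Fin n → ℂ) : (lf c).IsHomogeneous 1 := by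
  unfold lf
  exact IsHomogeneous.sum _ _ _ fun i _ => isHomogeneous_C_mul_X _ _

lemma exists_lf {n : ℕ} (P : MvPolynomial (Fin n) ℂ) (h : P.IsHomogeneous 1) :
    ∃ c, P = lf c := by
  rw [← mem_homogeneousSubmodule, homogeneousSubmodule_one_eq_span_X,
    Submodule.mem_span_range_iff_exists_fun] at h
  obtain ⟨c, hc⟩ := h
  exact ⟨c, by simp [lf, ← hc, smul_eq_C_mul]⟩

lemma lf_inj {n : ℕ} {c d : Fin n → ℂ} (h : lf c = lf d) : c = d := by
  funext k
  have := congrArg (eval (Pi.single k 1)) h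
  simpa [eval_lf, Pi.single_apply] using this

lemma lf_mem_iff {n : ℕ} (c : Fin n → ℂ) {a b : Fin n} (hab : a ≠ b) :
    lf c ∈ Ideal.span {(X a - X b : MvPolynomial (Fin n) ℂ)} ↔
      (∀ k, k ≠ a → k ≠ b → c k = 0) ∧ c a + c b = 0 := by
  rw [Ideal.mem_span_singleton]
  constructor
  · rintro ⟨R, hR⟩
    refine ⟨fun k hka hkb => ?_, ?_⟩
    · have := congrArg (eval (Pi.single k 1)) hR
      simpa [eval_lf, Pi.single_apply, hka.symm, hkb.symm] using this
    · have := congrArg (eval (Pi.single a 1 + Pi.single b 1)) hR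
      simpa [eval_lf, Pi.single_apply, hab, hab.symm, mul_add, Finset.sum_add_distrib] using this
  · rintro ⟨h1, h2⟩
    refine ⟨C (c a), ?_⟩
    have h3 : c b = - c a := by linear_combination h2
    have : lf c = C (c a) * X a + C (c b) * X b := by
      unfold lf
      rw [← Finset.sum_subset (Finset.subset_univ {a, b})]
      · rw [Finset.sum_pair hab]
      · intro k _ hk
        simp only [Finset.mem_insert, Finset.mem_singleton, not_or] at hk
        simp [h1 k hk.1 hk.2]
    rw [this, h3]
    simp only [map_neg]
    ring

/-- From coefficient families to functions with values in linear forms. -/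
noncomputable def toPoly (n : ℕ) :
    (Fin n → Perm (Fin n) → ℂ) →ₗ[ℂ] (Perm (Fin n) → MvPolynomial (Fin n) ℂ) where
  toFun b := fun w => lf (fun k => b (w⁻¹ k) w)
  map_add' b b' := by
    funext w
    simp [lf, add_mul, Finset.sum_add_distrib]
  map_smul' c b := by
    funext w
    simp [lf, Finset.smul_sum, smul_eq_C_mul, mul_assoc]

lemma toPoly_apply {n : ℕ} (b : Fin n → Perm (Fin n) → ℂ) (w : Perm (Fin n)) :
    toPoly n b w = lf (fun k => b (w⁻¹ k) w) := rfl

lemma toPoly_inj (n : ℕ) : Function.Injective (toPoly n) := by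
  intro b b' h
  funext p w
  have := congrFun (lf_inj (congrFun h w)) (w p)
  simpa using this

lemma toPoly_isSpline {n : ℕ} (Γ : SimpleGraph (Fin n)) (b : Fin n → Perm (Fin n) → ℂ) :
    IsSpline Γ (toPoly n b) ↔ b ∈ ESub Γ := by
  have key : ∀ (w : Perm (Fin n)) (i j : Fin n), Γ.Adj i j →
      (toPoly n b w - toPoly n b (w * swap i j) ∈
        Ideal.span {(X (w i) - X (w j) : MvPolynomial (Fin n) ℂ)} ↔
      (∀ p, p ≠ i → p ≠ j → b p (w * swap i j) = b p w) ∧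
        b i (w * swap i j) + b j (w * swap i j) = b i w + b j w) := by
    intro w i j hij
    rw [toPoly_apply, toPoly_apply, ← lf_sub, lf_mem_iff _ (fun h => hij.ne (w.injective h))]
    apply and_congr
    · constructor
      · intro h p hpi hpj
        have := h (w p) (fun h => hpi (w.injective h)) (fun h => hpj (w.injective h))
        simp [swap_apply_of_ne_of_ne hpi hpj] at this
        linear_combination - this
      · intro h k hki hkj
        obtain ⟨p, rfl⟩ := w.surjective k
        have hpi : p ≠ i := fun h => hki (h ▸ rfl)
        have hpj : p ≠ j := fun h => hkj (h ▸ rfl)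
        simp [swap_apply_of_ne_of_ne hpi hpj, h p hpi hpj]
    · simp
      constructor
      · intro h; linear_combination -h
      · intro h; linear_combination -h
  constructor
  · intro h
    refine ⟨fun p i j hij hpi hpj w => ?_, fun i j hij w => ?_⟩
    · exact ((key w i j hij).1 (h w i j hij)).1 p hpi hpj
    · exact ((key w i j hij).1 (h w i j hij)).2
  · rintro ⟨h1, h2⟩ w i j hij
    exact (key w i j hij).2 ⟨fun p hpi hpj => h1 p i j hij hpi hpj w, h2 i j hij w⟩

lemma map_toPoly {n : ℕ} (Γ : SimpleGraph (Fin n)) :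
    (ESub Γ).map (toPoly n) = linSplines Γ := by
  ext ρ
  constructor
  · rintro ⟨b, hb, rfl⟩
    exact ⟨(toPoly_isSpline Γ b).2 hb, fun w => lf_hom _⟩
  · rintro ⟨h1, h2⟩
    choose c hc using fun w => exists_lf (ρ w) (h2 w)
    have : ρ = toPoly n (fun p w => c w (w p)) := by
      funext w
      rw [hc, toPoly_apply]; simp
    refine ⟨fun p w => c w (w p), ?_, this.symm⟩
    rw [SetLike.mem_coe, ← toPoly_isSpline, ← this]
    exact h1

lemma finrank_linSplines {n : ℕ} (Γ : SimpleGraph (Fin n)) :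
    Module.finrank ℂ (linSplines Γ) = Module.finrank ℂ (ESub Γ) := by
  rw [← map_toPoly]
  exact (Submodule.equivMapOfInjective (toPoly n) (toPoly_inj n) (ESub Γ)).finrank_eq.symm

end LinSpl

namespace LinSpl

section Blocks

variable {n : ℕ} {Γ : SimpleGraph (Fin n)}

/-! ### Reachability avoiding a vertex -/

lemma dve_adj {q u v : Fin n} :
    (delVertexEdges Γ q).Adj u v ↔ Γ.Adj u v ∧ u ≠ q ∧ v ≠ q := by
  simp only [delVertexEdges, SimpleGraph.deleteEdges_adj, Set.mem_ofPred_eq, Sym2.mem_iff, not_or]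
  constructor
  · rintro ⟨h, h1, h2⟩; exact ⟨h, Ne.symm h1, Ne.symm h2⟩
  · rintro ⟨h, h1, h2⟩; exact ⟨h, Ne.symm h1, Ne.symm h2⟩

/-- `u` and `v` are joined by a walk of `Γ` avoiding `q` (or are equal). -/
abbrev RA (Γ : SimpleGraph (Fin n)) (q u v : Fin n) : Prop := (delVertexEdges Γ q).Reachable u v

lemma RA_adj {q u v : Fin n} (h : Γ.Adj u v) (hu : u ≠ q) (hv : v ≠ q) : RA Γ q u v :=
  (dve_adj.2 ⟨h, hu, hv⟩).reachable

lemma RA_ne {q u v : Fin n} (h : RA Γ q u v) (hu : u ≠ q) : v ≠ q := by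
  obtain ⟨p⟩ := h
  induction p with
  | nil => exact hu
  | cons ha _ ih => exact ih (dve_adj.1 ha).2.2

lemma first_hit (hΓ : Γ.Connected) {p g : Fin n} (hpg : p ≠ g) (u : Fin n) :
    RA Γ p u g ∨ RA Γ g u p := by
  obtain ⟨W⟩ := hΓ.preconnected u p
  induction W with
  | nil => exact Or.inr (SimpleGraph.Reachable.refl _)
  | @cons a b c ha _ ih =>
    by_cases hac : a = c
    · subst hac; exact Or.inr (SimpleGraph.Reachable.refl _)
    by_cases hag : a = g
    · subst hag; exact Or.inl (SimpleGraph.Reachable.refl _)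
    rcases ih hpg with h | h
    · left
      exact (RA_adj ha hac (RA_ne h.symm hpg.symm)).trans h
    · right
      exact (RA_adj ha hag (RA_ne h.symm hpg)).trans h

/-- No third vertex separates `u` from `v`. -/
def Nsep (Γ : SimpleGraph (Fin n)) (u v : Fin n) : Prop := ∀ q, q ≠ u → q ≠ v → RA Γ q u v

lemma Nsep.symm {u v : Fin n} (h : Nsep Γ u v) : Nsep Γ v u := fun q h1 h2 => (h q h2 h1).symm

lemma Nsep.refl (u : Fin n) : Nsep Γ u u := fun _ _ _ => SimpleGraph.Reachable.refl _

lemma Nsep.of_adj {u v : Fin n} (h : Γ.Adj u v) : Nsep Γ u v :=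
  fun _ h1 h2 => RA_adj h h1.symm h2.symm

/-- Maximal cliques of `Nsep`. -/
def IsMC (Γ : SimpleGraph (Fin n)) (B : Set (Fin n)) : Prop :=
  (∀ u ∈ B, ∀ v ∈ B, Nsep Γ u v) ∧ ∀ z, (∀ u ∈ B, Nsep Γ z u) → z ∈ B

lemma exists_IsMC (A : Set (Fin n)) (hA : ∀ u ∈ A, ∀ v ∈ A, Nsep Γ u v) :
    ∃ B, IsMC Γ B ∧ A ⊆ B := by
  obtain ⟨B, hAB, hB⟩ := Set.Finite.exists_le_maximal
    (s := {B : Set (Fin n) | ∀ u ∈ B, ∀ v ∈ B, Nsep Γ u v}) (Set.toFinite _) hA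
  refine ⟨B, ⟨hB.prop, fun z hz => ?_⟩, hAB⟩
  have h1 : insert z B ∈ {B : Set (Fin n) | ∀ u ∈ B, ∀ v ∈ B, Nsep Γ u v} := by
    intro u hu v hv
    rcases hu with rfl | hu <;> rcases hv with rfl | hv
    · exact Nsep.refl _
    · exact hz v hv
    · exact (hz u hu).symm
    · exact hB.prop u hu v hv
  exact hB.le_of_ge h1 (Set.subset_insert z B) (Set.mem_insert z B)

/-- `u` is attached to `B` at `p`. -/
def Att (Γ : SimpleGraph (Fin n)) (B : Set (Fin n)) (p u : Fin n) : Prop :=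
  u = p ∨ ∀ v ∈ B, v ≠ p → ¬ RA Γ p u v

lemma Att_congr {B : Set (Fin n)} {p x y : Fin n} (h : RA Γ p x y) (hx : x ≠ p) :
    Att Γ B p x ↔ Att Γ B p y := by
  have hy : y ≠ p := RA_ne h hx
  simp only [Att, hx, hy, false_or]
  constructor
  · intro H v hv hvp h'; exact H v hv hvp (h.trans h')
  · intro H v hv hvp h'; exact H v hv hvp (h.symm.trans h')

lemma Att_mem {B : Set (Fin n)} {p u : Fin n} (hu : u ∈ B) : Att Γ B p u ↔ u = p := by
  constructor
  · rintro (h | h)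
    · exact h
    · by_contra hne
      exact h u hu hne (SimpleGraph.Reachable.refl _)
  · exact Or.inl

lemma Att_unique (hΓ : Γ.Connected) {B : Set (Fin n)} {p p' u : Fin n} (hp : p ∈ B)
    (hp' : p' ∈ B) (h : Att Γ B p u) (h' : Att Γ B p' u) : p = p' := by
  by_contra hne
  rcases h with rfl | h
  · exact hne ((Att_mem hp).1 h')
  rcases h' with rfl | h'
  · exact h u hp' (Ne.symm hne) (SimpleGraph.Reachable.refl _)
  rcases first_hit hΓ hne u with H | H
  · exact h p' hp' (Ne.symm hne) H
  · exact h' p hp hne H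

lemma IsMC.nonempty [NeZero n] {B : Set (Fin n)} (hB : IsMC Γ B) : B.Nonempty := by
  by_contra h
  rw [Set.not_nonempty_iff_eq_empty] at h
  subst h
  exact (hB.2 0 (by simp)).elim

lemma Att_exists [NeZero n] (hΓ : Γ.Connected) {B : Set (Fin n)} (hB : IsMC Γ B) (u : Fin n) :
    ∃ p ∈ B, Att Γ B p u := by
  by_contra hcon
  push Not at hcon
  obtain ⟨b, hb⟩ := hB.nonempty
  have key : ∃ z, (∀ p ∈ B, ¬ Att Γ B p z) ∧ ∃ b0 ∈ B, Γ.Adj z b0 := by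
    obtain ⟨W⟩ := hΓ.preconnected u b
    induction W with
    | nil => exact absurd (Or.inl rfl) (hcon _ hb)
    | @cons a c d ha _ ih =>
      by_cases hc : c ∈ B
      · exact ⟨a, hcon, c, hc, ha⟩
      · refine ih (fun p hp hatt => ?_) hb
        have hap : a ≠ p := fun h => hcon p hp (Or.inl h)
        have hcp : c ≠ p := fun h => hc (h ▸ hp)
        exact hcon p hp ((Att_congr (RA_adj ha hap hcp) hap).2 hatt)
  obtain ⟨z, hz, b0, hb0, hadj⟩ := key
  have hzB : z ∉ B := fun h => hz z h (Or.inl rfl)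
  apply hzB
  apply hB.2
  intro v hv q hqz hqv
  by_cases hq : q ∈ B
  · have := hz q hq
    simp only [Att, not_or, not_forall, not_not] at this
    obtain ⟨_, x, hx, hxq, hr⟩ := this
    exact hr.trans (hB.1 x hx v hv q hxq.symm hqv)
  · have hqb : q ≠ b0 := fun h => hq (h ▸ hb0)
    exact (RA_adj hadj hqz.symm hqb.symm).trans (hB.1 b0 hb0 v hv q hqb hqv)

lemma Att_step {B : Set (Fin n)} {x y p p' : Fin n} (hΓ : Γ.Connected) (hadj : Γ.Adj x y)
    (hp : p ∈ B) (hp' : p' ∈ B) (h : Att Γ B p x) (h' : Att Γ B p' y) :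
    p = p' ∨ Γ.Adj p p' := by
  by_cases hxp : x = p
  · by_cases hyp : y = p'
    · right; rw [← hxp, ← hyp]; exact hadj
    · left
      by_contra hne
      have hxp' : x ≠ p' := fun h => hne (hxp ▸ h)
      have := (Att_congr (B := B) (RA_adj hadj hxp' hyp) hxp').2 h'
      exact hxp' ((Att_mem (hxp ▸ hp)).1 this)
  · by_cases hyp : y = p
    · left
      have hy : y ∈ B := hyp ▸ hp
      rw [← (Att_mem hy).1 h', hyp]
    · left
      exact Att_unique hΓ hp hp' ((Att_congr (RA_adj hadj hxp hyp) hxp).1 h) h'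

lemma retract {B S : Set (Fin n)} (hΓ : Γ.Connected) (H : SimpleGraph (Fin n)) (hH : H ≤ Γ)
    (hAtt : ∀ x, ∃ p ∈ B, Att Γ B p x) {u : Fin n} (huB : u ∈ B) (huS : u ∈ S)
    (hS : ∀ x p, H.Reachable u x → p ∈ B → Att Γ B p x → p ∈ S) {x : Fin n}
    (hx : H.Reachable u x) :
    ∀ p (hp : p ∈ B) (ha : Att Γ B p x),
      (Γ.induce S).Reachable ⟨u, huS⟩ ⟨p, hS x p hx hp ha⟩ := by
  have hx' := hx
  rw [SimpleGraph.reachable_iff_reflTransGen] at hx'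
  induction hx' with
  | refl =>
    intro p hp ha
    have := (Att_mem huB).1 ha
    subst this
    exact SimpleGraph.Reachable.refl _
  | @tail b c hab hbc ih =>
    intro p hp ha
    have hb : H.Reachable u b := (SimpleGraph.reachable_iff_reflTransGen _ _).2 hab
    obtain ⟨p0, hp0, ha0⟩ := hAtt b
    have h1 := ih hb p0 hp0 ha0
    rcases Att_step hΓ (hH hbc) hp0 hp ha0 ha with h | h
    · subst h; exact h1
    · refine h1.trans (SimpleGraph.Adj.reachable ?_)
      simpa using h

lemma IsMC.two_le [NeZero n] (hn : 2 ≤ n) (hΓ : Γ.Connected) {B : Set (Fin n)} (hB : IsMC Γ B) :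
    2 ≤ B.ncard := by
  obtain ⟨u, hu⟩ := hB.nonempty
  have : Nontrivial (Fin n) := Fin.nontrivial_iff_two_le.2 hn
  by_contra hlt
  have h1 : B.ncard ≤ 1 := by omega
  rw [Set.ncard_le_one_iff] at h1
  obtain ⟨v, hv⟩ := hΓ.preconnected.exists_adj_of_nontrivial u
  have hvB : v ∈ B := by
    apply hB.2
    intro x hx
    rw [h1 hx hu]
    exact (Nsep.of_adj hv).symm
  exact hv.ne (h1 hu hvB)

lemma IsMC.biconn [NeZero n] (hn : 2 ≤ n) (hΓ : Γ.Connected) {B : Set (Fin n)} (hB : IsMC Γ B) :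
    IsBiconn Γ B := by
  have h2 := hB.two_le hn hΓ
  refine ⟨h2, ?_, ?_⟩
  · obtain ⟨u, hu⟩ := hB.nonempty
    have : Nonempty B := ⟨⟨u, hu⟩⟩
    refine ⟨fun x y => ?_⟩
    exact retract hΓ Γ le_rfl (Att_exists hΓ hB) x.2 x.2 (fun _ _ _ hp _ => hp)
      (hΓ.preconnected x.1 y.1) y.1 y.2 (Or.inl rfl)
  · intro b hb
    obtain ⟨v, hv, hvb⟩ := Set.exists_ne_of_one_lt_ncard (by omega : 1 < B.ncard) b
    have : Nonempty (B \ {b} : Set (Fin n)) := ⟨⟨v, hv, hvb⟩⟩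
    refine ⟨fun x y => ?_⟩
    have hxb : x.1 ≠ b := x.2.2
    have hyb : y.1 ≠ b := y.2.2
    refine retract hΓ (delVertexEdges Γ b) (SimpleGraph.deleteEdges_le _) (Att_exists hΓ hB)
      x.2.1 x.2 (fun z p hz hp ha => ⟨hp, ?_⟩)
      (hB.1 _ x.2.1 _ y.2.1 b hxb.symm hyb.symm) y.1 y.2.1 (Or.inl rfl)
    rintro rfl
    rcases ha with ha | ha
    · exact RA_ne hz hxb ha
    · exact ha x.1 x.2.1 hxb hz.symm

lemma RA_of_induce {S : Set (Fin n)} {q : Fin n} (hq : q ∉ S) {a b : S}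
    (h : (Γ.induce S).Reachable a b) : RA Γ q a.1 b.1 := by
  refine h.map (G' := delVertexEdges Γ q) ⟨fun x => x.1, ?_⟩
  intro x y hxy
  refine dve_adj.2 ⟨by simpa using hxy, ?_, ?_⟩
  · rintro rfl; exact hq x.2
  · rintro rfl; exact hq y.2

lemma biconn_clique {B : Set (Fin n)} (hB : IsBiconn Γ B) :
    ∀ u ∈ B, ∀ v ∈ B, Nsep Γ u v := by
  intro u hu v hv q hqu hqv
  by_cases hq : q ∈ B
  · exact RA_of_induce (S := B \ {q}) (q := q) (by simp)
      ((hB.2.2 q hq).preconnected ⟨u, hu, hqu.symm⟩ ⟨v, hv, hqv.symm⟩)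
  · exact RA_of_induce (S := B) hq (hB.2.1.preconnected ⟨u, hu⟩ ⟨v, hv⟩)

lemma isBlock_iff [NeZero n] (hn : 2 ≤ n) (hΓ : Γ.Connected) (B : Set (Fin n)) :
    IsBlock Γ B ↔ IsMC Γ B := by
  constructor
  · rintro ⟨h1, h2⟩
    obtain ⟨M, hM, hBM⟩ := exists_IsMC B (biconn_clique h1)
    rw [← h2 M (hM.biconn hn hΓ) hBM]
    exact hM
  · intro hB
    refine ⟨hB.biconn hn hΓ, fun B' hB' hsub => ?_⟩
    refine Set.Subset.antisymm (fun z hz => ?_) hsub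
    exact hB.2 z fun u hu => biconn_clique hB' z hz u (hsub hu)

lemma IsMC.eq_of_two {B B' : Set (Fin n)} (hB : IsMC Γ B) (hB' : IsMC Γ B') {p g : Fin n}
    (hpg : p ≠ g) (hp : p ∈ B) (hg : g ∈ B) (hp' : p ∈ B') (hg' : g ∈ B') : B = B' := by
  have key : ∀ u ∈ B, ∀ v ∈ B', Nsep Γ u v := by
    intro u hu v hv q hqu hqv
    by_cases hqp : q = p
    · have hqg : q ≠ g := hqp ▸ hpg
      exact (hB.1 u hu g hg q hqu hqg).trans (hB'.1 g hg' v hv q hqg hqv)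
    · exact (hB.1 u hu p hp q hqu hqp).trans (hB'.1 p hp' v hv q hqp hqv)
  refine Set.Subset.antisymm (fun z hz => hB'.2 z (key z hz)) (fun z hz => ?_)
  exact hB.2 z fun u hu => (key u hu z hz).symm

lemma exists_nbr (hΓ : Γ.Connected) {p v : Fin n} (hv : v ≠ p) :
    ∃ g, Γ.Adj p g ∧ RA Γ p v g := by
  obtain ⟨W⟩ := hΓ.preconnected v p
  induction W with
  | nil => exact absurd rfl hv
  | @cons a b c ha _ ih =>
    by_cases hbc : b = c
    · subst hbc; exact ⟨a, ha.symm, SimpleGraph.Reachable.refl _⟩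
    · obtain ⟨g, hg, hr⟩ := ih hbc
      exact ⟨g, hg, (RA_adj ha hv hbc).trans hr⟩

lemma exists_edge_block {p g : Fin n} (h : Γ.Adj p g) : ∃ B, IsMC Γ B ∧ p ∈ B ∧ g ∈ B := by
  obtain ⟨B, hB, hsub⟩ := exists_IsMC (Γ := Γ) {p, g} (by
    have := Nsep.of_adj h
    intro u hu v hv
    rcases hu with rfl | rfl <;> rcases hv with rfl | rfl
    · exact Nsep.refl _
    · exact this
    · exact this.symm
    · exact Nsep.refl _)
  exact ⟨B, hB, hsub (by simp), hsub (by simp)⟩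

lemma exists_block_toward (hΓ : Γ.Connected) {p v : Fin n} (hv : v ≠ p) :
    ∃ B, IsMC Γ B ∧ p ∈ B ∧ ¬ Att Γ B p v := by
  obtain ⟨g, hg, hr⟩ := exists_nbr hΓ hv
  obtain ⟨B, hB, hp, hgB⟩ := exists_edge_block hg
  refine ⟨B, hB, hp, ?_⟩
  rintro (h | h)
  · exact hv h
  · exact h g hgB hg.ne.symm hr

lemma block_toward_unique [NeZero n] (hΓ : Γ.Connected) {p v : Fin n} {B B' : Set (Fin n)}
    (hB : IsMC Γ B) (hp : p ∈ B) (h : ¬ Att Γ B p v) (hB' : IsMC Γ B') (hp' : p ∈ B')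
    (h' : ¬ Att Γ B' p v) : B = B' := by
  simp only [Att, not_or, not_forall, not_not] at h h'
  obtain ⟨hvp, g, hg, hgp, hr⟩ := h
  obtain ⟨_, g', hg', hgp', hr'⟩ := h'
  obtain ⟨c, hc, hatt⟩ := Att_exists hΓ hB g'
  by_cases hcg : g' = c
  · subst hcg
    exact hB.eq_of_two hB' hgp'.symm hp hc hp' hg'
  · exfalso
    rcases hatt with hatt | hatt
    · exact hcg hatt
    by_cases hcp : p = c
    · subst hcp
      exact hatt g hg hgp (hr'.symm.trans hr)
    · exact hatt p hp hcp (hB'.1 g' hg' p hp' c (Ne.symm hcg) (Ne.symm hcp))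

/-- An edge with exactly one end in a block is attached at that end. -/
lemma Att_edge_out [NeZero n] (hΓ : Γ.Connected) {B : Set (Fin n)} (hB : IsMC Γ B)
    {i j : Fin n} (hi : i ∈ B) (hj : j ∉ B) (hadj : Γ.Adj i j) : Att Γ B i j := by
  obtain ⟨p, hp, ha⟩ := Att_exists hΓ hB j
  by_cases hpi : p = i
  · subst hpi; exact ha
  · exfalso
    have hjp : j ≠ p := fun h => hj (h ▸ hp)
    have := (Att_congr (RA_adj hadj.symm hjp (Ne.symm hpi)) hjp).1 ha
    exact hpi ((Att_mem hi).1 this).symm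

end Blocks

end LinSpl

namespace LinSpl

section Counting

variable {n : ℕ} {Γ : SimpleGraph (Fin n)}

open Classical in
/-- The finset of blocks. -/
noncomputable def bl (Γ : SimpleGraph (Fin n)) : Finset (Set (Fin n)) :=
  Finset.univ.filter (fun B => IsMC Γ B)

lemma mem_bl {B : Set (Fin n)} : B ∈ bl Γ ↔ IsMC Γ B := by simp [bl]

lemma notAtt_class {B : Set (Fin n)} (hB : IsMC Γ B) {p v : Fin n}
    (h : ¬ Att Γ B p v) (y : Fin n) : ¬ Att Γ B p y ↔ RA Γ p v y := by
  have hv : v ≠ p := fun h' => h (Or.inl h')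
  constructor
  · intro hy
    simp only [Att, not_or, not_forall, not_not] at h hy
    obtain ⟨_, g, hg, hgp, hr⟩ := h
    obtain ⟨_, g', hg', hgp', hr'⟩ := hy
    exact (hr.trans (hB.1 g hg g' hg' p hgp.symm hgp'.symm)).trans hr'.symm
  · intro hr hy
    exact h ((Att_congr hr hv).2 hy)

lemma exists_other [NeZero n] (hn : 2 ≤ n) (hΓ : Γ.Connected) {B : Set (Fin n)}
    (hB : IsMC Γ B) (p : Fin n) : ∃ v ∈ B, v ≠ p ∧ ¬ Att Γ B p v := by
  have := hB.two_le hn hΓ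
  obtain ⟨v, hv, hvb⟩ := Set.exists_ne_of_one_lt_ncard (by omega : 1 < B.ncard) p
  exact ⟨v, hv, hvb, fun h => hvb ((Att_mem hv).1 h)⟩

open Classical in
lemma numComp_eq [NeZero n] (hn : 2 ≤ n) (hΓ : Γ.Connected) (p : Fin n) :
    numComp Γ p = ((bl Γ).filter (fun B => p ∈ B)).card := by
  have h1 : {G : Set (Fin n) | ∃ v₀ : Fin n, v₀ ≠ p ∧
      G = {y | (delVertexEdges Γ p).Reachable v₀ y}} =
      (fun B : Set (Fin n) => {y | ¬ Att Γ B p y}) '' {B | IsMC Γ B ∧ p ∈ B} := by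
    ext G
    constructor
    · rintro ⟨v, hv, rfl⟩
      obtain ⟨B, hB, hp, hatt⟩ := exists_block_toward hΓ hv
      refine ⟨B, ⟨hB, hp⟩, ?_⟩
      ext y
      exact notAtt_class hB hatt y
    · rintro ⟨B, ⟨hB, hp⟩, rfl⟩
      obtain ⟨v, hv, hvp, hatt⟩ := exists_other hn hΓ hB p
      refine ⟨v, hvp, ?_⟩
      ext y
      exact notAtt_class hB hatt y
  have hinj : Set.InjOn (fun B : Set (Fin n) => {y | ¬ Att Γ B p y}) {B | IsMC Γ B ∧ p ∈ B} := by
    rintro B ⟨hB, hp⟩ B' ⟨hB', hp'⟩ heq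
    obtain ⟨v, hv, hvp, hatt⟩ := exists_other hn hΓ hB p
    have : v ∈ {y | ¬ Att Γ B' p y} := by
      rw [← show {y | ¬ Att Γ B p y} = {y | ¬ Att Γ B' p y} from heq]; exact hatt
    exact block_toward_unique hΓ hB hp hatt hB' hp' this
  unfold numComp
  rw [h1, hinj.ncard_image, ← Set.ncard_coe_finset]
  congr 1
  ext B
  simp [mem_bl]

lemma IsMC.ncard_eq {B : Set (Fin n)} [DecidablePred (· ∈ B)] :
    B.ncard = (Finset.univ.filter (fun p => p ∈ B)).card := by
  rw [← Set.ncard_coe_finset]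
  congr 1
  ext; simp

open Classical in
lemma sum_numComp [NeZero n] (hn : 2 ≤ n) (hΓ : Γ.Connected) :
    ∑ p, numComp Γ p = ∑ B ∈ bl Γ, B.ncard := by
  simp only [numComp_eq hn hΓ, IsMC.ncard_eq, Finset.card_filter]
  rw [Finset.sum_comm]

open Classical in
lemma sum_card_blocks [NeZero n] (hn : 2 ≤ n) (hΓ : Γ.Connected) :
    ∑ B ∈ bl Γ, B.ncard + 1 = (bl Γ).card + n := by
  have h1 : ∀ B ∈ bl Γ, B.ncard =
      (Finset.univ.filter (fun p => p ∈ B ∧ ¬ Att Γ B p 0)).card + 1 := by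
    intro B hB
    rw [mem_bl] at hB
    obtain ⟨p0, hp0, ha0⟩ := Att_exists hΓ hB 0
    have : Finset.univ.filter (fun p => p ∈ B ∧ ¬ Att Γ B p 0) =
        (Finset.univ.filter (fun p => p ∈ B)).erase p0 := by
      ext p
      simp only [Finset.mem_filter, Finset.mem_univ, true_and, Finset.mem_erase]
      constructor
      · rintro ⟨h, h'⟩
        exact ⟨fun e => h' (e ▸ ha0), h⟩
      · rintro ⟨h, h'⟩
        exact ⟨h', fun e => h (Att_unique hΓ h' hp0 e ha0)⟩
    rw [this, Finset.card_erase_of_mem (by simpa using hp0), IsMC.ncard_eq]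
    have : 0 < (Finset.univ.filter (fun p => p ∈ B)).card :=
      Finset.card_pos.2 ⟨p0, by simpa using hp0⟩
    omega
  rw [Finset.sum_congr rfl h1, Finset.sum_add_distrib]
  have h2 : ∑ B ∈ bl Γ, (Finset.univ.filter (fun p => p ∈ B ∧ ¬ Att Γ B p 0)).card + 1 = n := by
    simp only [Finset.card_filter]
    rw [Finset.sum_comm]
    have h3 : ∀ p : Fin n, (∑ B ∈ bl Γ, if p ∈ B ∧ ¬ Att Γ B p 0 then 1 else 0) =
        if p = 0 then 0 else 1 := by
      intro p
      split_ifs with hp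
      · subst hp
        refine Finset.sum_eq_zero fun B _ => ?_
        rw [if_neg]
        rintro ⟨_, h⟩
        exact h (Or.inl rfl)
      · obtain ⟨B0, hB0, hpB, hatt⟩ := exists_block_toward hΓ (Ne.symm hp)
        rw [Finset.sum_eq_single_of_mem B0 (mem_bl.2 hB0)]
        · rw [if_pos ⟨hpB, hatt⟩]
        · intro B hB hne
          rw [if_neg]
          rintro ⟨h, h'⟩
          exact hne (block_toward_unique hΓ (mem_bl.1 hB) h h' hB0 hpB hatt)
    rw [Finset.sum_congr rfl fun p _ => h3 p]
    have : ∀ p : Fin n, (if p = 0 then 0 else 1 : ℕ) = if p ≠ 0 then 1 else 0 := by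
      intro p; by_cases h : p = 0 <;> simp [h]
    simp only [this]
    rw [← Finset.card_filter, Finset.filter_ne', Finset.card_erase_of_mem (Finset.mem_univ _)]
    simp
    omega
  simp
  omega

/-! ### Cut vertices -/

lemma isCutVtx_iff (hn : 2 ≤ n) (j : Fin n) :
    IsCutVtx Γ j ↔ ∃ u v, u ≠ j ∧ v ≠ j ∧ ¬ RA Γ j u v := by
  have : Nontrivial (Fin n) := Fin.nontrivial_iff_two_le.2 hn
  obtain ⟨x, hx⟩ := exists_ne j
  have : Nonempty ({j}ᶜ : Set (Fin n)) := ⟨⟨x, hx⟩⟩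
  unfold IsCutVtx
  rw [← not_iff_not, not_not]
  push Not
  constructor
  · intro h u v hu hv
    exact RA_of_induce (S := ({j}ᶜ : Set (Fin n))) (q := j) (by simp)
      (h.preconnected ⟨u, hu⟩ ⟨v, hv⟩)
  · intro h
    refine ⟨fun a b => ?_⟩
    have key : ∀ u v (W : (delVertexEdges Γ j).Walk u v) (hu : u ≠ j) (hv : v ≠ j),
        (Γ.induce ({j}ᶜ : Set (Fin n))).Reachable ⟨u, hu⟩ ⟨v, hv⟩ := by
      intro u v W
      induction W with
      | nil => intro _ _; exact SimpleGraph.Reachable.refl _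
      | cons ha _ ih =>
        intro hu hv
        have h1 := dve_adj.1 ha
        refine SimpleGraph.Reachable.trans (SimpleGraph.Adj.reachable ?_) (ih h1.2.2 hv)
        simpa using h1.1
    obtain ⟨W⟩ := h a.1 b.1 a.2 b.2
    exact key _ _ W a.2 b.2

lemma numComp_of_not_cut [NeZero n] (hn : 2 ≤ n) (hΓ : Γ.Connected) {p : Fin n}
    (h : ¬ IsCutVtx Γ p) : numComp Γ p = 1 := by
  classical
  rw [isCutVtx_iff hn] at h
  push Not at h
  rw [numComp_eq hn hΓ, Finset.card_eq_one]
  have : Nontrivial (Fin n) := Fin.nontrivial_iff_two_le.2 hn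
  obtain ⟨x, hx⟩ := exists_ne p
  obtain ⟨B, hB, hp, hatt⟩ := exists_block_toward hΓ hx
  refine ⟨B, ?_⟩
  ext B'
  simp only [Finset.mem_filter, mem_bl, Finset.mem_singleton]
  constructor
  · rintro ⟨hB', hp'⟩
    obtain ⟨v, hv, hvp, hatt'⟩ := exists_other hn hΓ hB' p
    refine block_toward_unique hΓ hB' hp' hatt' hB hp ?_
    rw [← Att_congr (h x v hx hvp) hx]
    exact hatt
  · rintro rfl; exact ⟨hB, hp⟩

/-! ### Cut edges -/

lemma RA_del {i j q u v : Fin n} (hq : q = i ∨ q = j) (h : RA Γ q u v) :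
    (Γ.deleteEdges {s(i, j)}).Reachable u v := by
  refine h.mono (SimpleGraph.deleteEdges_anti ?_)
  intro e he
  rw [Set.mem_singleton_iff] at he
  subst he
  rcases hq with rfl | rfl <;> simp

lemma del_RA {i j : Fin n} (hadj : Γ.Adj i j) (h : ∀ r, ¬ (RA Γ j r i ∧ RA Γ i r j)) {y : Fin n}
    (hy : (Γ.deleteEdges {s(i, j)}).Reachable i y) : RA Γ j y i := by
  rw [SimpleGraph.reachable_iff_reflTransGen] at hy
  induction hy with
  | refl => exact SimpleGraph.Reachable.refl _
  | @tail x y _ hxy ih =>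
    rw [SimpleGraph.deleteEdges_adj, Set.mem_singleton_iff] at hxy
    have hxj : x ≠ j := RA_ne ih.symm hadj.ne
    by_cases hyj : y = j
    · subst hyj
      have hxi : x ≠ i := by
        rintro rfl; exact hxy.2 rfl
      exact absurd ⟨ih, RA_adj hxy.1 hxi hadj.ne.symm⟩ (h x)
    · exact (RA_adj hxy.1.symm hyj hxj).trans ih

lemma isCutEdge_iff (hΓ : Γ.Connected) {i j : Fin n} (hadj : Γ.Adj i j) :
    IsCutEdge Γ i j ↔ ∀ r, ¬ (RA Γ j r i ∧ RA Γ i r j) := by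
  constructor
  · rintro ⟨_, h⟩ r ⟨h1, h2⟩
    apply h
    have hij : (Γ.deleteEdges {s(i, j)}).Reachable i j :=
      (RA_del (Or.inr rfl) h1).symm.trans (RA_del (Or.inl rfl) h2)
    have hall : ∀ u, (Γ.deleteEdges {s(i, j)}).Reachable u i := by
      intro u
      rcases first_hit hΓ hadj.ne u with h | h
      · exact (RA_del (Or.inl rfl) h).trans hij.symm
      · exact RA_del (Or.inr rfl) h
    have : Nonempty (Fin n) := ⟨i⟩
    exact ⟨fun u v => (hall u).trans (hall v).symm⟩
  · intro h
    refine ⟨hadj, fun hc => ?_⟩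
    have := del_RA hadj h (hc.preconnected i j)
    exact RA_ne this.symm hadj.ne rfl

lemma cut_reach (hΓ : Γ.Connected) {i j : Fin n} (h : IsCutEdge Γ i j) (y : Fin n) :
    (Γ.deleteEdges {s(i, j)}).Reachable i y ↔ RA Γ j y i :=
  ⟨del_RA h.1 ((isCutEdge_iff hΓ h.1).1 h), fun h' => (RA_del (Or.inr rfl) h').symm⟩

lemma cut_reach' (hΓ : Γ.Connected) {i j : Fin n} (h : IsCutEdge Γ i j) (y : Fin n) :
    ¬ (Γ.deleteEdges {s(i, j)}).Reachable i y ↔ RA Γ i y j := by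
  rw [cut_reach hΓ h]
  constructor
  · intro h1
    rcases first_hit hΓ h.1.ne y with h2 | h2
    · exact h2
    · exact absurd h2 h1
  · intro h1 h2
    exact (isCutEdge_iff hΓ h.1).1 h y ⟨h2, h1⟩

lemma cut_block (hΓ : Γ.Connected) {i j : Fin n} (h : IsCutEdge Γ i j) {B : Set (Fin n)}
    (hB : IsMC Γ B) (hi : i ∈ B) (hj : j ∈ B) : B = {i, j} := by
  refine Set.Subset.antisymm (fun u hu => ?_) (by rintro x (rfl | rfl) <;> assumption)
  by_contra hcon
  simp only [Set.mem_insert_iff, Set.mem_singleton_iff, not_or] at hcon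
  exact (isCutEdge_iff hΓ h.1).1 h u
    ⟨hB.1 u hu i hi j (Ne.symm hcon.2) h.1.ne.symm, hB.1 u hu j hj i (Ne.symm hcon.1) h.1.ne⟩

lemma cut_isMC (hΓ : Γ.Connected) {i j : Fin n} (h : IsCutEdge Γ i j) : IsMC Γ {i, j} := by
  obtain ⟨B, hB, hi, hj⟩ := exists_edge_block h.1
  rw [← cut_block hΓ h hB hi hj]
  exact hB

lemma isCutEdge_of_block [NeZero n] (hn : 2 ≤ n) (hΓ : Γ.Connected) {i j : Fin n} (hij : i ≠ j)
    (hB : IsMC Γ {i, j}) : IsCutEdge Γ i j := by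
  have hadj : Γ.Adj i j := by
    have hc := (hB.biconn hn hΓ).2.1
    have : Nontrivial ({i, j} : Set (Fin n)) :=
      ⟨⟨⟨i, by simp⟩, ⟨j, by simp⟩, fun h => hij (congrArg Subtype.val h)⟩⟩
    obtain ⟨⟨v, hv⟩, hv'⟩ := hc.preconnected.exists_adj_of_nontrivial ⟨i, by simp⟩
    have h1 : Γ.Adj i v := by simpa using hv'
    rcases hv with rfl | hv
    · exact absurd rfl h1.ne
    · rw [Set.mem_singleton_iff] at hv
      exact hv ▸ h1
  rw [isCutEdge_iff hΓ hadj]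
  rintro r ⟨h1, h2⟩
  obtain ⟨p, hp, hatt⟩ := Att_exists hΓ hB r
  rcases hatt with rfl | hatt
  · rcases hp with rfl | hp
    · exact RA_ne h2.symm hij.symm rfl
    · rw [Set.mem_singleton_iff] at hp
      subst hp
      exact RA_ne h1.symm hij rfl
  · rcases hp with rfl | hp
    · exact hatt j (by simp) hij.symm h2
    · rw [Set.mem_singleton_iff] at hp
      subst hp
      exact hatt i (by simp) hij h1

end Counting

end LinSpl

namespace LinSpl

section Formula

variable {n : ℕ} {Γ : SimpleGraph (Fin n)}

open Classical in
/-- The finset of cut edges, as ordered pairs. -/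
noncomputable def cutS (Γ : SimpleGraph (Fin n)) : Finset (Fin n × Fin n) :=
  Finset.univ.filter (fun p => p.1 < p.2 ∧ IsCutEdge Γ p.1 p.2)

/-- The number of vertices on the `p.1`-side. -/
noncomputable def mS (Γ : SimpleGraph (Fin n)) (p : Fin n × Fin n) : ℕ :=
  ({y | (Γ.deleteEdges {s(p.1, p.2)}).Reachable p.1 y} : Set (Fin n)).ncard

open Classical in
/-- The finset of blocks with more than two vertices. -/
noncomputable def bigs (Γ : SimpleGraph (Fin n)) : Finset (Set (Fin n)) :=
  (bl Γ).filter (fun B => 2 < B.ncard)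

lemma mem_cutS {p : Fin n × Fin n} : p ∈ cutS Γ ↔ p.1 < p.2 ∧ IsCutEdge Γ p.1 p.2 := by
  simp [cutS]

lemma card_cutS_filter [NeZero n] (hn : 2 ≤ n) (hΓ : Γ.Connected) (Q : Set (Fin n) → Prop)
    [DecidablePred Q] :
    ((cutS Γ).filter (fun p => Q {p.1, p.2})).card =
      ((bl Γ).filter (fun B => B.ncard = 2 ∧ Q B)).card := by
  refine Finset.card_bij (fun p _ => {p.1, p.2}) ?_ ?_ ?_
  · intro p hp
    rw [Finset.mem_filter, mem_cutS] at hp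
    rw [Finset.mem_filter, mem_bl]
    exact ⟨cut_isMC hΓ hp.1.2, Set.ncard_pair hp.1.1.ne, hp.2⟩
  · rintro ⟨a, b⟩ hp ⟨c, d⟩ hp' heq
    rw [Finset.mem_filter, mem_cutS] at hp hp'
    have h1 := hp.1.1
    have h2 := hp'.1.1
    simp only at h1 h2 heq
    rcases Set.pair_eq_pair_iff.1 heq with ⟨rfl, rfl⟩ | ⟨rfl, rfl⟩
    · rfl
    · exact absurd h2 (not_lt.2 h1.le)
  · intro B hB
    rw [Finset.mem_filter, mem_bl] at hB
    obtain ⟨hB, h2, hQ⟩ := hB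
    obtain ⟨x, y, hxy, rfl⟩ := Set.ncard_eq_two.1 h2
    rcases lt_or_gt_of_ne hxy with h | h
    · exact ⟨(x, y), by
        rw [Finset.mem_filter, mem_cutS]
        exact ⟨⟨h, isCutEdge_of_block hn hΓ hxy hB⟩, hQ⟩, rfl⟩
    · rw [Set.pair_comm] at hB hQ
      exact ⟨(y, x), by
        rw [Finset.mem_filter, mem_cutS]
        exact ⟨⟨h, isCutEdge_of_block hn hΓ hxy.symm hB⟩, hQ⟩, Set.pair_comm _ _⟩

lemma card_bl [NeZero n] (hn : 2 ≤ n) (hΓ : Γ.Connected) :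
    (bl Γ).card = (cutS Γ).card + (bigs Γ).card := by
  classical
  have h1 := card_cutS_filter hn hΓ (fun _ => True)
  rw [Finset.filter_true_of_mem (by simp)] at h1
  rw [h1, bigs, ← Finset.card_filter_add_card_filter_not (s := bl Γ) (fun B => B.ncard = 2)]
  congr 2
  · ext; simp
  · ext B
    simp only [Finset.mem_filter, mem_bl, and_congr_right_iff]
    intro hB
    have := hB.two_le hn hΓ
    omega

open Classical in
/-- cut edges with an endpoint that is not a cut vertex -/
noncomputable def leafS (Γ : SimpleGraph (Fin n)) : Finset (Fin n × Fin n) :=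
  (cutS Γ).filter (fun p => ¬ (IsCutVtx Γ p.1 ∧ IsCutVtx Γ p.2))

lemma choose_leaf (hn : 2 ≤ n) (hΓ : Γ.Connected) {p : Fin n × Fin n} (hp : p ∈ leafS Γ) :
    n.choose (mS Γ p) = n := by
  classical
  rw [leafS, Finset.mem_filter, mem_cutS] at hp
  obtain ⟨⟨hlt, hc⟩, hp⟩ := hp
  rw [isCutVtx_iff hn, isCutVtx_iff hn, not_and_or] at hp
  push Not at hp
  rcases hp with hp | hp
  · have : mS Γ p = 1 := by
      rw [mS, Set.ncard_eq_one]
      refine ⟨p.1, ?_⟩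
      ext y
      simp only [Set.mem_ofPred_eq, Set.mem_singleton_iff]
      constructor
      · intro h
        by_contra hne
        exact (cut_reach' hΓ hc y).2 (hp y p.2 hne hlt.ne') h
      · rintro rfl; exact SimpleGraph.Reachable.refl _
    rw [this, Nat.choose_one_right]
  · have : mS Γ p = n - 1 := by
      rw [mS]
      have : ({y | (Γ.deleteEdges {s(p.1, p.2)}).Reachable p.1 y} : Set (Fin n)) = {p.2}ᶜ := by
        ext y
        simp only [Set.mem_ofPred_eq, Set.mem_compl_iff, Set.mem_singleton_iff]
        rw [cut_reach hΓ hc]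
        constructor
        · rintro h rfl
          exact RA_ne h.symm hlt.ne rfl
        · intro h
          exact hp y p.1 h hlt.ne
      rw [this, Set.ncard_compl]
      simp
    rw [this, Nat.choose_symm (by omega), Nat.choose_one_right]

lemma exists_cut_in_block [NeZero n] (hn : 2 ≤ n) (hΓ : Γ.Connected) (hc : ∃ j, IsCutVtx Γ j)
    {B : Set (Fin n)} (hB : IsMC Γ B) : 1 ≤ ({j ∈ B | IsCutVtx Γ j} : Set (Fin n)).ncard := by
  rw [Nat.one_le_iff_ne_zero, Ne, Set.ncard_eq_zero]
  rw [← Ne, ← Set.nonempty_iff_ne_empty]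
  obtain ⟨j, hj⟩ := hc
  by_cases hjB : j ∈ B
  · exact ⟨j, hjB, hj⟩
  · obtain ⟨p, hp, hatt⟩ := Att_exists hΓ hB j
    refine ⟨p, hp, ?_⟩
    rw [isCutVtx_iff hn]
    obtain ⟨v, hv, hvp, _⟩ := exists_other hn hΓ hB p
    rcases hatt with rfl | hatt
    · exact absurd hp hjB
    · exact ⟨j, v, fun h => hjB (h ▸ hp), hvp, hatt v hv hvp⟩

lemma LB_IB [NeZero n] (hn : 3 ≤ n) (hΓ : Γ.Connected) :
    (LeafBlocks Γ).ncard + ({B ∈ InternalBlocks Γ | 2 < B.ncard} : Set (Set (Fin n))).ncard =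
      (bigs Γ).card + (leafS Γ).card := by
  classical
  have hn2 : 2 ≤ n := by omega
  by_cases hc : ∃ j, IsCutVtx Γ j
  · simp only [LeafBlocks, InternalBlocks, if_pos hc, isBlock_iff hn2 hΓ]
    have e1 : ({B | IsMC Γ B ∧ ({j ∈ B | IsCutVtx Γ j} : Set (Fin n)).ncard = 1} :
        Set (Set (Fin n))) = ((bl Γ).filter
          (fun B => ({j ∈ B | IsCutVtx Γ j} : Set (Fin n)).ncard = 1) : Finset _) := by
      ext B; simp [mem_bl]
    have e2 : ({B ∈ {B | IsMC Γ B ∧ 2 ≤ ({j ∈ B | IsCutVtx Γ j} : Set (Fin n)).ncard} |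
        2 < B.ncard} : Set (Set (Fin n))) = ((bigs Γ).filter
          (fun B => ¬ ({j ∈ B | IsCutVtx Γ j} : Set (Fin n)).ncard = 1) : Finset _) := by
      ext B
      simp only [Set.mem_ofPred_eq, Finset.coe_filter, bigs, Finset.mem_filter, mem_bl]
      constructor
      · rintro ⟨⟨h1, h2⟩, h3⟩; exact ⟨⟨h1, h3⟩, by omega⟩
      · rintro ⟨⟨h1, h3⟩, h2⟩
        have := exists_cut_in_block hn2 hΓ hc h1
        exact ⟨⟨h1, by omega⟩, h3⟩
    rw [e1, e2, Set.ncard_coe_finset, Set.ncard_coe_finset]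
    rw [← Finset.card_filter_add_card_filter_not (s := bigs Γ)
      (fun B => ({j ∈ B | IsCutVtx Γ j} : Set (Fin n)).ncard = 1)]
    rw [← Finset.card_filter_add_card_filter_not (s := (bl Γ).filter
      (fun B => ({j ∈ B | IsCutVtx Γ j} : Set (Fin n)).ncard = 1)) (fun B => 2 < B.ncard)]
    have e3 : (((bl Γ).filter
      (fun B => ({j ∈ B | IsCutVtx Γ j} : Set (Fin n)).ncard = 1)).filter (fun B => 2 < B.ncard))
      = (bigs Γ).filter (fun B => ({j ∈ B | IsCutVtx Γ j} : Set (Fin n)).ncard = 1) := by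
      ext B; simp only [bigs, Finset.mem_filter]; tauto
    have e4 : ((((bl Γ).filter (fun B => ({j ∈ B | IsCutVtx Γ j} : Set (Fin n)).ncard = 1)).filter
        (fun B => ¬ 2 < B.ncard))).card = (leafS Γ).card := by
      have h1 := card_cutS_filter hn2 hΓ
        (fun B => ({j ∈ B | IsCutVtx Γ j} : Set (Fin n)).ncard = 1)
      have h2 : leafS Γ = (cutS Γ).filter (fun p =>
          ({j ∈ ({p.1, p.2} : Set (Fin n)) | IsCutVtx Γ j} : Set (Fin n)).ncard = 1) := by
        ext p
        simp only [leafS, Finset.mem_filter, and_congr_right_iff, mem_cutS]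
        rintro ⟨hlt, hce⟩
        have hge := exists_cut_in_block hn2 hΓ hc (cut_isMC hΓ hce)
        constructor
        · intro h
          refine le_antisymm ?_ hge
          rw [Set.ncard_le_one_iff]
          rintro a b ⟨ha, ha'⟩ ⟨hb, hb'⟩
          rcases ha with rfl | ha <;> rcases hb with rfl | hb
          · rfl
          · rw [Set.mem_singleton_iff] at hb; subst hb; exact absurd ⟨ha', hb'⟩ h
          · rw [Set.mem_singleton_iff] at ha; subst ha; exact absurd ⟨hb', ha'⟩ h
          · rw [Set.mem_singleton_iff] at ha hb; rw [ha, hb]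
        · rintro h ⟨h1, h2⟩
          have h0 := h.le
          rw [Set.ncard_le_one] at h0
          have h3 := h0 p.1 ⟨by simp, h1⟩ p.2 ⟨by simp, h2⟩
          exact hlt.ne h3
      rw [h2, h1]
      congr 1
      ext B
      simp only [Finset.mem_filter, mem_bl]
      constructor
      · rintro ⟨⟨h1, h2⟩, h3⟩
        have := h1.two_le hn2 hΓ
        exact ⟨h1, by omega, h2⟩
      · rintro ⟨h1, h2, h3⟩
        exact ⟨⟨h1, h3⟩, by omega⟩
    rw [e3, e4]
    omega
  · simp only [LeafBlocks, InternalBlocks, if_neg hc]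
    push Not at hc
    have hall : ∀ u v : Fin n, Nsep Γ u v := by
      intro u v q hq hq'
      have := hc q
      rw [isCutVtx_iff hn2] at this
      push Not at this
      exact this u v hq.symm hq'.symm
    have hbl : bl Γ = {Set.univ} := by
      ext B
      rw [mem_bl, Finset.mem_singleton]
      constructor
      · intro hB
        exact Set.eq_univ_of_forall fun z => hB.2 z fun u _ => hall z u
      · rintro rfl
        exact ⟨fun u _ v _ => hall u v, fun z _ => Set.mem_univ z⟩
    have hu : (Set.univ : Set (Fin n)).ncard = n := by simp [Set.ncard_univ]
    have hbig : bigs Γ = {Set.univ} := by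
      rw [bigs, hbl, Finset.filter_true_of_mem]
      intro B hB
      rw [Finset.mem_singleton] at hB
      subst hB
      omega
    have h1 := card_bl hn2 hΓ
    rw [hbl, hbig] at h1
    have h2 : cutS Γ = ∅ := by
      rw [← Finset.card_eq_zero]; omega
    have e : ({B ∈ ({Set.univ} : Set (Set (Fin n))) | 2 < B.ncard} : Set (Set (Fin n))) =
        {Set.univ} := by
      ext B
      simp only [Set.mem_singleton_iff, Set.mem_ofPred_eq, and_iff_left_iff_imp]
      rintro rfl
      omega
    rw [e, hbig, leafS, h2]
    simp

lemma Dinv_eq [NeZero n] (hn : 3 ≤ n) (hΓ : Γ.Connected) :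
    Dinv Γ + (cutS Γ).card + (bigs Γ).card =
      n + ∑ p ∈ cutS Γ, (n.choose (mS Γ p) : ℤ) + n * (bigs Γ).card := by
  classical
  have hn2 : 2 ≤ n := by omega
  have h1 : ∑ j ∈ Finset.univ.filter (fun j : Fin n => IsCutVtx Γ j), ((numComp Γ j : ℤ) - 1)
      = ∑ B ∈ bl Γ, (B.ncard : ℤ) - n := by
    rw [Finset.sum_filter_of_ne]
    · rw [Finset.sum_sub_distrib]
      have := sum_numComp hn2 hΓ
      have h2 : ∑ p, (numComp Γ p : ℤ) = ∑ B ∈ bl Γ, (B.ncard : ℤ) := by exact_mod_cast this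
      rw [h2]; simp
    · intro j _ hj
      by_contra hcon
      exact hj (by rw [numComp_of_not_cut hn2 hΓ hcon]; simp)
  have h2 : ∑ B ∈ bl Γ, (B.ncard : ℤ) + 1 = (bl Γ).card + n := by
    exact_mod_cast sum_card_blocks hn2 hΓ
  have h3 : ((bl Γ).card : ℤ) = (cutS Γ).card + (bigs Γ).card := by
    exact_mod_cast card_bl hn2 hΓ
  have h4 : ((LeafBlocks Γ).ncard : ℤ)
        + (({B ∈ InternalBlocks Γ | 2 < B.ncard} : Set (Set (Fin n))).ncard : ℤ) =
      (bigs Γ).card + (leafS Γ).card := by exact_mod_cast LB_IB hn hΓ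
  have h5 : ∑ p ∈ Finset.univ.filter (fun p : Fin n × Fin n =>
        p.1 < p.2 ∧ IsCutEdge Γ p.1 p.2 ∧ IsCutVtx Γ p.1 ∧ IsCutVtx Γ p.2),
        ((n.choose ({y | (Γ.deleteEdges {s(p.1, p.2)}).Reachable p.1 y} :
            Set (Fin n)).ncard : ℤ)) + n * (leafS Γ).card
      = ∑ p ∈ cutS Γ, (n.choose (mS Γ p) : ℤ) := by
    rw [← Finset.sum_filter_add_sum_filter_not (cutS Γ)
      (fun p => IsCutVtx Γ p.1 ∧ IsCutVtx Γ p.2)]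
    congr 1
    · refine Finset.sum_congr ?_ fun p _ => rfl
      ext p
      simp only [Finset.mem_filter, mem_cutS, Finset.mem_univ, true_and]
      tauto
    · rw [← leafS, Finset.sum_congr rfl fun p hp => by rw [choose_leaf hn2 hΓ hp]]
      simp [mul_comm]
  unfold Dinv
  rw [h1, h4]
  linear_combination -h2 - h3 + h5

end Formula

end LinSpl

namespace LinSpl

section Johnson

/-- An abstract "peeling" argument: a triangle-closed antisymmetric function on a ranked graph
is a coboundary. -/
lemma peel {V : Type*} (Adj : V → V → Prop) (hsymm : ∀ u v, Adj u v → Adj v u) (r : V → ℕ)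
    (c : V → V → ℂ)
    (hanti : ∀ u v, Adj u v → c u v = - c v u)
    (htri : ∀ u v x, Adj u v → Adj v x → Adj u x → c u v + c v x = c u x)
    (hlow : ∀ v, 0 < r v → ∃ u, Adj v u ∧ r u + 1 = r v)
    (hlow2 : ∀ v u u', Adj v u → Adj v u' → r u + 1 = r v → r u' + 1 = r v →
      ∃ u'', Adj v u'' ∧ r u'' + 1 = r v ∧ (u'' = u ∨ Adj u'' u) ∧ (u'' = u' ∨ Adj u'' u'))
    (hsame : ∀ v v', Adj v v' → r v = r v' → ∃ u, Adj v u ∧ Adj v' u ∧ r u + 1 = r v)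
    (hdiff : ∀ u v, Adj u v → r u ≤ r v + 1) :
    ∃ f : V → ℂ, ∀ u v, Adj u v → c u v = f u - f v := by
  classical
  have hl : ∀ v, ∃ u, 0 < r v → (Adj v u ∧ r u + 1 = r v) := by
    intro v
    by_cases h : 0 < r v
    · obtain ⟨u, hu⟩ := hlow v h
      exact ⟨u, fun _ => hu⟩
    · exact ⟨v, fun h' => absurd h' h⟩
  choose l hl using hl
  let F : ℕ → V → ℂ := fun k => Nat.rec (fun _ => 0) (fun _ G v => c v (l v) + G (l v)) k
  let f : V → ℂ := fun v => F (r v) v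
  have hf : ∀ v, 0 < r v → f v = c v (l v) + f (l v) := by
    intro v hv
    have h1 := (hl v hv).2
    change F (r v) v = c v (l v) + F (r (l v)) (l v)
    rw [← h1]
  refine ⟨f, ?_⟩
  have key : ∀ k u v, Adj u v → r u ≤ k → r v ≤ k → c u v = f u - f v := by
    intro k
    induction k with
    | zero =>
      intro u v huv hu hv
      obtain ⟨x, -, -, hx⟩ := hsame u v huv (by omega)
      omega
    | succ k ih =>
      have A : ∀ v u, Adj v u → r v = k + 1 → r u + 1 = r v → c v u = f v - f u := by
        intro v u hvu hv hu
        obtain ⟨h1, h2⟩ := hl v (by omega)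
        obtain ⟨x, hx1, hx2, hx3, hx4⟩ := hlow2 v u (l v) hvu h1 hu h2
        have B : ∀ y, Adj v y → r y + 1 = r v → (x = y ∨ Adj x y) →
            c v y + f y = c v x + f x := by
          intro y hy hy2 hxy
          rcases hxy with rfl | hxy
          · rfl
          · have e1 := ih x y hxy (by omega) (by omega)
            have e2 := htri v x y hx1 hxy hy
            rw [← e2, e1]; ring
        have e1 := B u hvu hu hx3
        have e2 := B (l v) h1 h2 hx4
        rw [hf v (by omega), e2, ← e1]; ring
      intro u v huv hu hv
      rcases lt_trichotomy (r u) (r v) with h | h | h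
      · by_cases hk : r v ≤ k
        · exact ih u v huv (by omega) hk
        · have := hdiff v u (hsymm _ _ huv)
          rw [hanti u v huv, A v u (hsymm _ _ huv) (by omega) (by omega)]; ring
      · by_cases hk : r v ≤ k
        · exact ih u v huv (by omega) hk
        · obtain ⟨x, hx1, hx2, hx3⟩ := hsame u v huv h
          have e1 := A u x hx1 (by omega) hx3
          have e2 := A v x hx2 (by omega) (by omega)
          have e3 := htri u x v hx1 (hsymm _ _ hx2) huv
          rw [hanti x v (hsymm _ _ hx2)] at e3
          rw [← e3, e1, e2]; ring
      · by_cases hk : r u ≤ k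
        · exact ih u v huv hk (by omega)
        · have := hdiff u v huv
          exact A u v huv (by omega) (by omega)
  intro u v huv
  exact key (max (r u) (r v)) u v huv (le_max_left _ _) (le_max_right _ _)

variable {α : Type*} [DecidableEq α]

/-- Adjacency in the Johnson graph. -/
def JAdj (T T' : Finset α) : Prop := ∃ x ∈ T, ∃ y ∉ T, T' = insert y (T.erase x)

lemma JAdj.symm {T T' : Finset α} (h : JAdj T T') : JAdj T' T := by
  obtain ⟨x, hx, y, hy, rfl⟩ := h
  refine ⟨y, by simp, x, ?_, ?_⟩
  · grind
  · ext z; grind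

lemma card_move {T : Finset α} {x y : α} (hx : x ∈ T) (hy : y ∉ T) :
    (insert y (T.erase x)).card = T.card := by
  rw [Finset.card_insert_of_notMem (by grind), Finset.card_erase_of_mem hx]
  have := Finset.card_pos.2 ⟨x, hx⟩
  omega

lemma rk_move {T S : Finset α} {x y : α} (hx : x ∈ T) (hy : y ∉ T) :
    (insert y (T.erase x) \ S).card + (if x ∈ S then 0 else 1) =
      (T \ S).card + (if y ∈ S then 0 else 1) := by
  have e1 : (insert y (T.erase x) \ S).card =
      ((T \ S).erase x).card + (if y ∈ S then 0 else 1) := by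
    split_ifs with h
    · congr 1; ext z; grind
    · rw [← Finset.card_insert_of_notMem (s := (T \ S).erase x) (a := y) (by grind)]
      congr 1; ext z; grind
  have e2 : ((T \ S).erase x).card + (if x ∈ S then 0 else 1) = (T \ S).card := by
    split_ifs with h
    · rw [Finset.erase_eq_of_notMem (by grind), add_zero]
    · rw [Finset.card_erase_add_one (by grind)]
  omega

lemma exists_back {T S : Finset α} (hc : T.card = S.card) (h : 0 < (T \ S).card) :
    ∃ c ∈ S, c ∉ T := by
  have h1 := Finset.card_sdiff_add_card_inter T S
  have h2 := Finset.card_sdiff_add_card_inter S T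
  rw [Finset.inter_comm] at h2
  have h3 : 0 < (S \ T).card := by omega
  obtain ⟨c, hcc⟩ := Finset.card_pos.1 h3
  exact ⟨c, by grind, by grind⟩

/-- Triangle-closed antisymmetric functions on the Johnson graph are coboundaries. -/
lemma johnson {m : ℕ} (c : {T : Finset α // T.card = m} → {T : Finset α // T.card = m} → ℂ)
    (hanti : ∀ u v, JAdj u.1 v.1 → c u v = - c v u)
    (htri : ∀ u v x, JAdj u.1 v.1 → JAdj v.1 x.1 → JAdj u.1 x.1 → c u v + c v x = c u x) :
    ∃ f : {T : Finset α // T.card = m} → ℂ, ∀ u v, JAdj u.1 v.1 → c u v = f u - f v := by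
  by_cases hne : Nonempty {T : Finset α // T.card = m}
  swap
  · exact ⟨fun _ => 0, fun u => absurd ⟨u⟩ hne⟩
  obtain ⟨S, hS⟩ := hne
  refine peel (fun u v => JAdj u.1 v.1) (fun u v h => h.symm) (fun T => (T.1 \ S).card) c
    hanti htri ?_ ?_ ?_ ?_
  · rintro ⟨T, hT⟩ h
    obtain ⟨a, ha⟩ := Finset.card_pos.1 h
    obtain ⟨b, hb, hb'⟩ := exists_back (hT.trans hS.symm) h
    rw [Finset.mem_sdiff] at ha
    have := rk_move (S := S) ha.1 hb'
    rw [if_neg ha.2, if_pos hb] at this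
    exact ⟨⟨_, (card_move ha.1 hb').trans hT⟩, ⟨a, ha.1, b, hb', rfl⟩, this⟩
  · rintro ⟨T, hT⟩ ⟨_, hU⟩ ⟨_, hU'⟩ ⟨a, ha, b, hb, rfl⟩ ⟨a', ha', b', hb', rfl⟩ h h'
    dsimp only at ha hb ha' hb' h h' ⊢
    have r1 := rk_move (S := S) ha hb
    have r2 := rk_move (S := S) ha' hb'
    have r3 := rk_move (S := S) ha hb'
    have haS : a ∉ S := by intro hh; rw [if_pos hh] at r1; omega
    have hbS : b ∈ S := by
      by_contra hh; rw [if_neg hh, if_neg haS] at r1; omega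
    have haS' : a' ∉ S := by intro hh; rw [if_pos hh] at r2; omega
    have hbS' : b' ∈ S := by
      by_contra hh; rw [if_neg hh, if_neg haS'] at r2; omega
    rw [if_neg haS, if_pos hbS'] at r3
    refine ⟨⟨_, (card_move ha hb').trans hT⟩, ⟨a, ha, b', hb', rfl⟩, r3, ?_, ?_⟩
    · by_cases hbb : b = b'
      · subst hbb; exact Or.inl rfl
      · refine Or.inr ⟨b', by simp, b, by grind, ?_⟩
        ext z; grind
    · by_cases haa : a = a'
      · subst haa; exact Or.inl rfl
      · refine Or.inr ⟨a', by grind, a, by grind, ?_⟩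
        ext z; grind
  · rintro ⟨T, hT⟩ ⟨_, hU⟩ ⟨x, hx, y, hy, rfl⟩ h
    dsimp only at hx hy h ⊢
    have r1 := rk_move (S := S) hx hy
    by_cases hxS : x ∈ S
    · have hyS : y ∈ S := by
        by_contra hh; rw [if_neg hh, if_pos hxS] at r1; omega
      have hpos : 0 < (T \ S).card := by
        by_contra h0
        have hsub : T ⊆ S := by
          rw [← Finset.sdiff_eq_empty_iff_subset, ← Finset.card_eq_zero]; omega
        have := Finset.eq_of_subset_of_card_le hsub (by omega)
        exact hy (this ▸ hyS)
      obtain ⟨a, ha⟩ := Finset.card_pos.1 hpos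
      rw [Finset.mem_sdiff] at ha
      have r2 := rk_move (S := S) ha.1 hy
      rw [if_neg ha.2, if_pos hyS] at r2
      refine ⟨⟨_, (card_move ha.1 hy).trans hT⟩, ⟨a, ha.1, y, hy, rfl⟩,
        ⟨a, by grind, x, by grind, ?_⟩, r2⟩
      ext z; grind
    · have hyS : y ∉ S := by
        intro hh; rw [if_pos hh, if_neg hxS] at r1; omega
      have hpos : 0 < (T \ S).card := Finset.card_pos.2 ⟨x, by grind⟩
      obtain ⟨b, hb, hb'⟩ := exists_back (hT.trans hS.symm) hpos
      have r2 := rk_move (S := S) hx hb'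
      rw [if_neg hxS, if_pos hb] at r2
      refine ⟨⟨_, (card_move hx hb').trans hT⟩, ⟨x, hx, b, hb', rfl⟩,
        ⟨y, by grind, b, by grind, ?_⟩, r2⟩
      ext z; grind
  · rintro ⟨T, hT⟩ ⟨_, hU⟩ ⟨x, hx, y, hy, rfl⟩
    dsimp only at hx hy ⊢
    have r1 := rk_move (S := S) hx hy
    split_ifs at r1 <;> omega

end Johnson

end LinSpl

namespace LinSpl

open Equiv

section Local

variable {n : ℕ} {Γ : SimpleGraph (Fin n)}

lemma E_inv {b : Fin n → Perm (Fin n) → ℂ} (hb : b ∈ ESub Γ) {p u v : Fin n}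
    (h : RA Γ p u v) : Inv (b p) u v := by
  refine Inv.of_reachable _ ?_ h
  intro x y hxy
  rw [dve_adj] at hxy
  exact hb.1 p x y hxy.1 hxy.2.1.symm hxy.2.2.symm

lemma E_anti {b : Fin n → Perm (Fin n) → ℂ} (hb : b ∈ ESub Γ) {i j : Fin n}
    (h : Γ.Adj i j) (w : Perm (Fin n)) :
    b i w - b i (w * swap i j) = -(b j w - b j (w * swap i j)) := by
  linear_combination - hb.2 i j h w

lemma swap3 {i j u : Fin n} (hij : i ≠ j) (hiu : i ≠ u) :
    swap j u * swap i j * swap j u = swap i u := by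
  rw [swap_mul_swap_mul_swap hij hiu, swap_comm]

lemma triangle {F : Perm (Fin n) → ℂ} {i j u : Fin n} (hij : i ≠ j) (hiu : i ≠ u)
    (hju : j ≠ u) (hF : Inv F j u) (w : Perm (Fin n)) :
    (F w - F (w * swap i j)) +
      (F (w * swap i j * swap j u) - F (w * swap i j * swap j u * swap i j)) =
      F (w * swap j u) - F (w * swap j u * swap i j) := by
  have e1 : F (w * swap i j * swap j u * swap i j) = F (w * swap i u) := by
    congr 1
    have := swap3 (i := u) (j := j) (u := i) hju.symm hiu.symm
    rw [swap_comm j i, swap_comm u j, swap_comm u i] at this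
    rw [mul_assoc, mul_assoc, ← this, mul_assoc]
  have e2 : F (w * swap j u * swap i j) = F (w * swap i u) := by
    rw [← hF (w * swap j u * swap i j), ← swap3 hij hiu]
    simp only [mul_assoc]
  rw [e1, e2, hF, hF]
  ring

lemma swap_comm_of_disj {i j y z : Fin n} (h1 : y ≠ i) (h2 : y ≠ j) (h3 : z ≠ i) (h4 : z ≠ j) :
    swap y z * swap i j = swap i j * swap y z := by
  ext x
  simp only [Perm.mul_apply, swap_apply_def]
  grind

lemma D_inv_left {F : Perm (Fin n) → ℂ} {i j y z : Fin n} (h1 : y ≠ i) (h2 : y ≠ j)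
    (h3 : z ≠ i) (h4 : z ≠ j) (hF : Inv F y z) :
    Inv (fun w => F w - F (w * swap i j)) y z := by
  intro w
  simp only
  rw [mul_assoc, swap_comm_of_disj h1 h2 h3 h4, ← mul_assoc, hF, hF]

lemma E_D_inv {b : Fin n → Perm (Fin n) → ℂ} (hb : b ∈ ESub Γ) {i j y z : Fin n}
    (hadj : Γ.Adj i j) (h1 : y ≠ i) (h2 : y ≠ j)
    (h3 : z ≠ i) (h4 : z ≠ j) (h : RA Γ i y z ∨ RA Γ j y z) :
    Inv (fun w => b i w - b i (w * swap i j)) y z := by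
  rcases h with h | h
  · exact D_inv_left h1 h2 h3 h4 (E_inv hb h)
  · have := D_inv_left h1 h2 h3 h4 (E_inv hb h)
    intro w
    have := this w
    simp only at this ⊢
    rw [E_anti hb hadj, E_anti hb hadj w, this]

/-- The potential of a single edge in a big block. -/
lemma big_edge (hΓ : Γ.Connected) {b : Fin n → Perm (Fin n) → ℂ} (hb : b ∈ ESub Γ)
    {B : Set (Fin n)} (hB : IsMC Γ B) {i j u : Fin n} (hadj : Γ.Adj i j) (hi : i ∈ B) (hj : j ∈ B)
    (hu : u ∈ B) (hui : u ≠ i) (huj : u ≠ j) :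
    ∃ x : Fin n → ℂ, ∀ w, b i w - b i (w * swap i j) = x (w i) - x (w j) := by
  classical
  have hij : i ≠ j := hadj.ne
  set D : Perm (Fin n) → ℂ := fun w => b i w - b i (w * swap i j) with hD
  have r1 : RA Γ i u j := hB.1 u hu j hj i hui.symm hij
  have r2 : RA Γ j u i := hB.1 u hu i hi j huj.symm hij.symm
  have hI : ∀ y, y ≠ i → y ≠ j → Inv D y u := by
    intro y hyi hyj
    refine E_D_inv hb hadj hyi hyj hui huj ?_
    rcases first_hit hΓ hij y with h | h
    · exact Or.inl (h.trans r1.symm)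
    · exact Or.inr (h.trans r2.symm)
  have hdep : ∀ w w' : Perm (Fin n), w i = w' i → w j = w' j → D w = D w' := by
    intro w w' h1 h2
    have := Inv.perm (F := D) (w⁻¹ * w') ?_ w
    · rw [← this]; simp
    · intro y
      have hfi : (w⁻¹ * w') i = i := by simp [← h1]
      have hfj : (w⁻¹ * w') j = j := by simp [← h2]
      by_cases hyi : y = i
      · rw [hyi, hfi]; exact Inv.refl _ _
      by_cases hyj : y = j
      · rw [hyj, hfj]; exact Inv.refl _ _
      refine (hI y hyi hyj).trans (hI _ ?_ ?_).symm
      · intro h; apply hyi; rw [← hfi] at h; exact (w⁻¹ * w').injective h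
      · intro h; apply hyj; rw [← hfj] at h; exact (w⁻¹ * w').injective h
  have hanti : ∀ w, D (w * swap i j) = - D w := by
    intro w
    simp only [hD, mul_assoc, swap_mul_self, mul_one]; ring
  have htri := fun w => triangle hij hui.symm huj.symm (E_inv hb r1.symm) w
  have htri : ∀ w, D w + D (w * swap i j * swap j u) = D (w * swap j u) := htri
  let h : Fin n → Fin n → ℂ := fun k l =>
    if hh : ∃ w : Perm (Fin n), w i = k ∧ w j = l then D hh.choose else 0
  have hh : ∀ w : Perm (Fin n), h (w i) (w j) = D w := by
    intro w
    have hex : ∃ w' : Perm (Fin n), w' i = w i ∧ w' j = w j := ⟨w, rfl, rfl⟩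
    simp only [h, dif_pos hex]
    exact hdep _ _ hex.choose_spec.1 hex.choose_spec.2
  refine ⟨fun k => if k = i then 0 else h k i, fun w => ?_⟩
  change D w = _
  simp only
  by_cases hk : w i = i
  · have hl : w j ≠ i := fun h => hij (w.injective (hk.trans h.symm))
    rw [if_pos hk, if_neg hl]
    have := hh (w * swap i j)
    simp only [Perm.mul_apply, swap_apply_left, swap_apply_right, hanti, hk] at this
    rw [this]; ring
  by_cases hl : w j = i
  · rw [if_neg hk, if_pos hl]
    have := hh w
    rw [hl] at this
    rw [this]; ring
  rw [if_neg hk, if_neg hl]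
  -- move `i` to position `u`
  set y := w⁻¹ i with hy
  have hwy : w y = i := by simp [hy]
  have hyi : y ≠ i := fun h => hk (h ▸ hwy)
  have hyj : y ≠ j := fun h => hl (h ▸ hwy)
  have hw := hI y hyi hyj w
  have e := htri (w * swap y u)
  rw [hw] at e
  have e1 := hh (w * swap y u * swap i j * swap j u)
  have e2 := hh (w * swap y u * swap j u)
  simp only [Perm.mul_apply, swap_apply_left, swap_apply_right,
    swap_apply_of_ne_of_ne hij hui.symm,
    swap_apply_of_ne_of_ne hui huj, swap_apply_of_ne_of_ne hyi.symm hui.symm,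
    swap_apply_of_ne_of_ne hyj.symm huj.symm, hwy] at e1 e2
  rw [e1, e2, ← e]; ring

lemma big_exists [NeZero n] (hn : 2 ≤ n) (hΓ : Γ.Connected) {b : Fin n → Perm (Fin n) → ℂ}
    (hb : b ∈ ESub Γ) {B : Set (Fin n)} (hB : IsMC Γ B) (h2 : 2 < B.ncard) :
    ∃ x : Fin n → ℂ, ∀ i j, i ∈ B → j ∈ B → Γ.Adj i j → ∀ w,
      b i w - b i (w * swap i j) = x (w i) - x (w j) := by
  obtain ⟨-, hcon, -⟩ := hB.biconn hn hΓ
  have third : ∀ i j : Fin n, ∃ u ∈ B, u ≠ i ∧ u ≠ j := by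
    intro i j
    by_contra hcon
    push Not at hcon
    have : B ⊆ {i, j} := by
      intro u hu
      by_cases h : u = i
      · exact Or.inl h
      · exact Or.inr (hcon u hu h)
    have := Set.ncard_le_ncard this
    have := Set.ncard_insert_le i {j}
    rw [Set.ncard_singleton] at this
    omega
  have spread : ∀ (x : Fin n → ℂ) i j, i ∈ B → j ∈ B → i ≠ j →
      (∀ w, b i w - b i (w * swap i j) = x (w i) - x (w j)) →
      ∀ v ∈ B, v ≠ i → ∀ w, b i w - b i (w * swap i v) = x (w i) - x (w v) := by
    intro x i j hi hj hij hx v hv hvi w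
    by_cases hvj : v = j
    · subst hvj; exact hx w
    have hI : Inv (b i) j v := E_inv hb (hB.1 j hj v hv i hij hvi.symm)
    have := hx (w * swap j v)
    rw [hI] at this
    rw [← swap3 hij hvi.symm, ← mul_assoc, ← mul_assoc, hI, this]
    simp only [Perm.mul_apply, swap_apply_left, swap_apply_of_ne_of_ne hij hvi.symm]
  obtain ⟨i₀, hi₀⟩ := hB.nonempty
  obtain ⟨v, hv, hvi, -⟩ := third i₀ i₀
  -- an edge at `i₀`
  have hnt : ∃ j, j ∈ B ∧ Γ.Adj i₀ j := by
    obtain ⟨p⟩ := hcon.preconnected ⟨i₀, hi₀⟩ ⟨v, hv⟩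
    cases p with
    | nil => exact absurd rfl hvi
    | cons ha _ => exact ⟨_, Subtype.prop _, ha⟩
  obtain ⟨j₀, hj₀, hadj⟩ := hnt
  obtain ⟨u, hu, hui, huj⟩ := third i₀ j₀
  obtain ⟨x, hx⟩ := big_edge hΓ hb hB hadj hi₀ hj₀ hu hui huj
  refine ⟨x, ?_⟩
  have P0 := spread x i₀ j₀ hi₀ hj₀ hadj.ne hx
  have step : ∀ i j, i ∈ B → j ∈ B → Γ.Adj i j →
      (∀ v ∈ B, v ≠ i → ∀ w, b i w - b i (w * swap i v) = x (w i) - x (w v)) →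
      (∀ v ∈ B, v ≠ j → ∀ w, b j w - b j (w * swap j v) = x (w j) - x (w v)) := by
    intro i j hi hj hij hP
    refine spread x j i hj hi hij.ne.symm fun w => ?_
    rw [E_anti hb hij.symm, swap_comm, hP j hj hij.ne.symm w]; ring
  have all : ∀ i : B, ∀ v ∈ B, v ≠ i.1 → ∀ w, b i w - b i (w * swap i.1 v) = x (w i) - x (w v) := by
    intro i
    have hr := hcon.preconnected ⟨i₀, hi₀⟩ i
    rw [SimpleGraph.reachable_iff_reflTransGen] at hr
    induction hr with
    | refl => exact P0
    | tail _ h ih => exact step _ _ (Subtype.prop _) (Subtype.prop _) h ih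
  intro i j hi hj hij w
  exact all ⟨i, hi⟩ j hj hij.ne.symm w

/-! ### Cut edges -/

lemma map_swap_mem {L : Finset (Fin n)} {y z : Fin n} (h : y ∈ L ↔ z ∈ L) (w : Perm (Fin n)) :
    L.map (w * swap y z).toEmbedding = L.map w.toEmbedding := by
  ext x
  simp only [Finset.mem_map_equiv]
  change (w * swap y z)⁻¹ x ∈ L ↔ w⁻¹ x ∈ L
  rw [mul_inv_rev, swap_inv, Perm.mul_apply, swap_apply_def]
  split_ifs with h1 h2
  · rw [h1]; exact h.symm
  · rw [h2]; exact h
  · rfl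

lemma map_swap_cut {L : Finset (Fin n)} {i j : Fin n} (hi : i ∈ L) (hj : j ∉ L)
    (w : Perm (Fin n)) :
    L.map (w * swap i j).toEmbedding = insert (w j) ((L.map w.toEmbedding).erase (w i)) := by
  ext x
  simp only [Finset.mem_insert, Finset.mem_erase, Finset.mem_map_equiv]
  change (w * swap i j)⁻¹ x ∈ L ↔ x = w j ∨ x ≠ w i ∧ w⁻¹ x ∈ L
  obtain ⟨z, rfl⟩ := w.surjective x
  rw [mul_inv_rev, swap_inv, Perm.mul_apply]
  have hz : w⁻¹ (w z) = z := by simp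
  rw [hz]
  simp only [EmbeddingLike.apply_eq_iff_eq, ne_eq, swap_apply_def]
  grind

lemma exists_perm_map {L T : Finset (Fin n)} (h : T.card = L.card) :
    ∃ w : Perm (Fin n), L.map w.toEmbedding = T := by
  have e : {x // x ∈ L} ≃ {x // x ∈ T} := Fintype.equivOfCardEq (by simp [h])
  refine ⟨e.extendSubtype, ?_⟩
  apply Finset.eq_of_subset_of_card_le
  · intro x hx
    rw [Finset.mem_map] at hx
    obtain ⟨y, hy, rfl⟩ := hx
    exact e.extendSubtype_mem y hy
  · rw [Finset.card_map]; exact h.le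

lemma exists_perm_map2 {L T : Finset (Fin n)} (h : T.card = L.card) {i j x y : Fin n}
    (hi : i ∈ L) (hj : j ∉ L) (hx : x ∈ T) (hy : y ∉ T) :
    ∃ w : Perm (Fin n), L.map w.toEmbedding = T ∧ w i = x ∧ w j = y := by
  obtain ⟨w0, hw0⟩ := exists_perm_map h
  have hxL : w0⁻¹ x ∈ L := by
    rw [← hw0, Finset.mem_map_equiv] at hx; exact hx
  have hw1 := (map_swap_mem (L := L) (y := i) (z := w0⁻¹ x) (iff_of_true hi hxL) w0).trans hw0
  have hw1i : (w0 * swap i (w0⁻¹ x)) i = x := by simp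
  set w1 := w0 * swap i (w0⁻¹ x)
  have hyL : w1⁻¹ y ∉ L := by
    rw [← hw1, Finset.mem_map_equiv] at hy; exact hy
  have hw2 := (map_swap_mem (L := L) (y := j) (z := w1⁻¹ y) (iff_of_false hj hyL) w1).trans hw1
  refine ⟨w1 * swap j (w1⁻¹ y), hw2, ?_, by simp⟩
  rw [Perm.mul_apply, swap_apply_of_ne_of_ne, hw1i]
  · rintro rfl; exact hj hi
  · intro h; rw [← h] at hyL; exact hyL hi

/-- The image of `L` under `w`, as a set of fixed size. -/
def mv {m : ℕ} (L : Finset (Fin n)) (hm : L.card = m) (w : Perm (Fin n)) :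
    {T : Finset (Fin n) // T.card = m} := ⟨L.map w.toEmbedding, by simp [hm]⟩

lemma J_aux1 {T : Finset (Fin n)} {x y : Fin n} (hx : x ∈ T) (hy : y ∉ T)
    (h : JAdj T (insert x ((insert y (T.erase x)).erase y))) : False := by
  obtain ⟨a, ha, b, hb, he⟩ := h
  have : b ∈ insert b (T.erase a) := by simp
  rw [← he] at this
  simp only [Finset.mem_insert, Finset.mem_erase] at this
  rcases this with rfl | ⟨h1, h2 | ⟨-, h2⟩⟩
  · exact hb hx
  · exact h1 h2
  · exact hb h2

lemma J_aux2 {T : Finset (Fin n)} {x y z t : Fin n} (hy : y ∉ T)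
    (ht : t ∉ insert y (T.erase x)) (hzy : z ≠ y)
    (h : JAdj T (insert t ((insert y (T.erase x)).erase z))) : t = x := by
  by_contra htx
  simp only [Finset.mem_insert, Finset.mem_erase, not_or, not_and] at ht
  obtain ⟨a, ha, b, hb, he⟩ := h
  have e1 : y ∈ insert b (T.erase a) := by rw [← he]; simp [hzy.symm]
  have e2 : t ∈ insert b (T.erase a) := by rw [← he]; simp
  simp only [Finset.mem_insert, Finset.mem_erase] at e1 e2
  have e1 : y = b := by
    rcases e1 with h | h
    · exact h
    · exact absurd h.2 hy
  have e2 : t = b := by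
    rcases e2 with h | h
    · exact h
    · exact absurd h.2 (ht.2 htx)
  exact ht.1 (e2.trans e1.symm)

lemma J_aux3 {T : Finset (Fin n)} {x y t : Fin n} (hy : y ∉ T) :
    insert t (T.erase x) = insert t ((insert y (T.erase x)).erase y) := by
  ext q; grind

lemma J_aux4 {T : Finset (Fin n)} {x y z : Fin n} (hx : x ∈ T) (hy : y ∉ T) (hz : z ∈ T)
    (hzx : z ≠ x) :
    insert y (T.erase z) = insert x ((insert y (T.erase x)).erase z) := by
  ext q; grind

lemma cut_abs {m : ℕ} (L : Finset (Fin n)) (hm : L.card = m) {i j : Fin n} (hi : i ∈ L)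
    (hj : j ∉ L) (D : Perm (Fin n) → ℂ) (hanti : ∀ w, D (w * swap i j) = - D w)
    (hL : ∀ y z, y ∈ L → z ∈ L → y ≠ i → z ≠ i → Inv D y z)
    (hR : ∀ y z, y ∉ L → z ∉ L → y ≠ j → z ≠ j → Inv D y z)
    (htL : ∀ u ∈ L, u ≠ i → ∀ w, D w + D (w * swap i j * swap i u) = D (w * swap i u))
    (htR : ∀ u ∉ L, u ≠ j → ∀ w, D w + D (w * swap i j * swap j u) = D (w * swap j u)) :
    ∃ f : {T : Finset (Fin n) // T.card = m} → ℂ, ∀ w,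
      D w = f (mv L hm w) - f (mv L hm (w * swap i j)) := by
  classical
  have hij : i ≠ j := by rintro rfl; exact hj hi
  have hdep : ∀ w w' : Perm (Fin n), L.map w.toEmbedding = L.map w'.toEmbedding →
      L.map (w * swap i j).toEmbedding = L.map (w' * swap i j).toEmbedding → D w = D w' := by
    intro w w' h1 h2
    rw [map_swap_cut hi hj, map_swap_cut hi hj, ← h1] at h2
    have m1 : w i ∈ L.map w.toEmbedding := by simp [hi]
    have m2 : w j ∉ L.map w.toEmbedding := by simp [hj]
    have m1' : w' i ∈ L.map w.toEmbedding := by rw [h1]; simp [hi]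
    have m2' : w' j ∉ L.map w.toEmbedding := by rw [h1]; simp [hj]
    have ei : w i = w' i := by
      by_contra hne
      have : w i ∈ insert (w' j) ((L.map w.toEmbedding).erase (w' i)) := by
        rw [Finset.mem_insert, Finset.mem_erase]; exact Or.inr ⟨hne, m1⟩
      rw [← h2, Finset.mem_insert, Finset.mem_erase] at this
      rcases this with h | h
      · exact hij (w.injective h)
      · exact h.1 rfl
    have ej : w j = w' j := by
      have : w j ∈ insert (w' j) ((L.map w.toEmbedding).erase (w' i)) := by
        rw [← h2]; simp
      rw [Finset.mem_insert, Finset.mem_erase] at this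
      rcases this with h | h
      · exact h
      · exact absurd h.2 m2
    have := Inv.perm (F := D) (w⁻¹ * w') ?_ w
    · rw [← this]; simp
    · intro y
      have hfi : (w⁻¹ * w') i = i := by simp [← ei]
      have hfj : (w⁻¹ * w') j = j := by simp [← ej]
      by_cases hyi : y = i
      · rw [hyi, hfi]; exact Inv.refl _ _
      by_cases hyj : y = j
      · rw [hyj, hfj]; exact Inv.refl _ _
      have n1 : (w⁻¹ * w') y ≠ i := by
        intro h; apply hyi; rw [← hfi] at h; exact (w⁻¹ * w').injective h
      have n2 : (w⁻¹ * w') y ≠ j := by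
        intro h; apply hyj; rw [← hfj] at h; exact (w⁻¹ * w').injective h
      have hmem : (w⁻¹ * w') y ∈ L ↔ y ∈ L := by
        have : w' y ∈ L.map w.toEmbedding ↔ w' y ∈ L.map w'.toEmbedding := by rw [h1]
        simpa [Finset.mem_map_equiv] using this
      by_cases hyL : y ∈ L
      · exact hL _ _ hyL (hmem.2 hyL) hyi n1
      · exact hR _ _ hyL (fun h => hyL (hmem.1 h)) hyj n2
  let c : {T : Finset (Fin n) // T.card = m} → {T : Finset (Fin n) // T.card = m} → ℂ :=
    fun T T' => if h : ∃ w : Perm (Fin n), L.map w.toEmbedding = T.1 ∧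
      L.map (w * swap i j).toEmbedding = T'.1 then D h.choose else 0
  have hc : ∀ (w : Perm (Fin n)) (T T' : {T : Finset (Fin n) // T.card = m}),
      L.map w.toEmbedding = T.1 → L.map (w * swap i j).toEmbedding = T'.1 → c T T' = D w := by
    intro w T T' h1 h2
    have hex : ∃ w : Perm (Fin n), L.map w.toEmbedding = T.1 ∧
      L.map (w * swap i j).toEmbedding = T'.1 := ⟨w, h1, h2⟩
    simp only [c, dif_pos hex]
    exact hdep _ _ (hex.choose_spec.1.trans h1.symm) (hex.choose_spec.2.trans h2.symm)
  suffices hs : ∃ f : {T : Finset (Fin n) // T.card = m} → ℂ,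
      ∀ u v, JAdj u.1 v.1 → c u v = f u - f v by
    obtain ⟨f, hf⟩ := hs
    refine ⟨f, fun w => ?_⟩
    rw [← hf, hc w _ _ rfl rfl]
    refine ⟨w i, by simp [mv, hi], w j, by simp [mv, hj], ?_⟩
    exact map_swap_cut hi hj w
  refine johnson c ?_ ?_
  · rintro ⟨T, hT⟩ ⟨_, hT'⟩ ⟨x, hx, y, hy, rfl⟩
    dsimp only at hx hy ⊢
    obtain ⟨w, h1, rfl, rfl⟩ := exists_perm_map2 (hT.trans hm.symm) hi hj hx hy
    have h2 := map_swap_cut hi hj w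
    rw [h1] at h2
    rw [hc w _ _ h1 h2, hc (w * swap i j) _ _ h2 (by simpa [mul_assoc] using h1), hanti, neg_neg]
  · rintro ⟨T, hT⟩ ⟨_, hT'⟩ ⟨_, hT''⟩ ⟨x, hx, y, hy, rfl⟩ ⟨z, hz, t, ht, rfl⟩ h3
    dsimp only at hx hy hz ht h3 ⊢
    obtain ⟨w, h1, rfl, rfl⟩ := exists_perm_map2 (hT.trans hm.symm) hi hj hx hy
    have h2 := map_swap_cut hi hj w
    rw [h1] at h2
    have c1 := hc w ⟨T, hT⟩ ⟨_, hT'⟩ h1 h2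
    rw [c1]
    by_cases hzy : z = w j
    · subst hzy
      have htx : t ≠ w i := by
        rintro rfl
        exact J_aux1 hx hy h3
      have htT : t ∉ T := fun h =>
        ht (Finset.mem_insert_of_mem (Finset.mem_erase.2 ⟨htx, h⟩))
      obtain ⟨u, rfl⟩ := w.surjective t
      have huL : u ∉ L := by rw [← h1] at htT; simpa using htT
      have huj : u ≠ j := by rintro rfl; exact ht (by simp)
      have hui : u ≠ i := by rintro rfl; exact htx rfl
      have k1 := (map_swap_mem (L := L) (y := j) (z := u) (by simp [hj, huL])
        (w * swap i j)).trans h2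
      have k1' := map_swap_cut hi hj (w * swap i j * swap j u)
      have k2 := (map_swap_mem (L := L) (y := j) (z := u) (by simp [hj, huL]) w).trans h1
      have k2' := map_swap_cut hi hj (w * swap j u)
      rw [k1] at k1'
      rw [k2] at k2'
      simp only [Perm.mul_apply, swap_apply_left, swap_apply_right,
        swap_apply_of_ne_of_ne hij hui.symm, swap_apply_of_ne_of_ne hui huj] at k1' k2'
      rw [hc _ ⟨_, hT'⟩ ⟨_, hT''⟩ k1 k1', hc _ ⟨T, hT⟩ ⟨_, hT''⟩ k2 (by
        rw [k2']; exact J_aux3 hy)]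
      exact htR u huL huj w
    · have hz' := Finset.mem_erase.1 (Finset.mem_of_mem_insert_of_ne hz hzy)
      have hzT : z ∈ T := hz'.2
      have hzx : z ≠ w i := hz'.1
      have htx : t = w i := J_aux2 hy ht hzy h3
      subst htx
      obtain ⟨u, rfl⟩ := w.surjective z
      have huL : u ∈ L := by rw [← h1] at hzT; simpa using hzT
      have huj : u ≠ j := by rintro rfl; exact hj huL
      have hui : u ≠ i := by rintro rfl; exact hzx rfl
      have k1 := (map_swap_mem (L := L) (y := i) (z := u) (by simp [hi, huL])
        (w * swap i j)).trans h2
      have k1' := map_swap_cut hi hj (w * swap i j * swap i u)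
      have k2 := (map_swap_mem (L := L) (y := i) (z := u) (by simp [hi, huL]) w).trans h1
      have k2' := map_swap_cut hi hj (w * swap i u)
      rw [k1] at k1'
      rw [k2] at k2'
      simp only [Perm.mul_apply, swap_apply_left, swap_apply_right,
        swap_apply_of_ne_of_ne hij.symm huj.symm, swap_apply_of_ne_of_ne hui huj] at k1' k2'
      rw [hc _ ⟨_, hT'⟩ ⟨_, hT''⟩ k1 k1', hc _ ⟨T, hT⟩ ⟨_, hT''⟩ k2 (by
        rw [k2']; exact J_aux4 hx hy hzT hzx)]
      exact htL u huL hui w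

lemma cut_exists (hΓ : Γ.Connected) {b : Fin n → Perm (Fin n) → ℂ}
    (hb : b ∈ ESub Γ) {i j : Fin n} (h : IsCutEdge Γ i j) {m : ℕ} (L : Finset (Fin n))
    (hm : L.card = m) (hmem : ∀ y, y ∈ L ↔ (Γ.deleteEdges {s(i, j)}).Reachable i y) :
    ∃ f : {T : Finset (Fin n) // T.card = m} → ℂ, ∀ w,
      b i w - b i (w * swap i j) = f (mv L hm w) - f (mv L hm (w * swap i j)) := by
  have hadj := h.1
  have hij := hadj.ne
  have h1 : ∀ y, y ∈ L ↔ RA Γ j y i := fun y => (hmem y).trans (cut_reach hΓ h y)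
  have h2 : ∀ y, y ∉ L ↔ RA Γ i y j := fun y => (not_congr (hmem y)).trans (cut_reach' hΓ h y)
  have hi : i ∈ L := (h1 i).2 (SimpleGraph.Reachable.refl _)
  have hj : j ∉ L := (h2 j).2 (SimpleGraph.Reachable.refl _)
  refine cut_abs L hm hi hj (fun w => b i w - b i (w * swap i j)) ?_ ?_ ?_ ?_ ?_
  · intro w
    simp only [mul_assoc, swap_mul_self, mul_one]; ring
  · intro y z hy hz hyi hzi
    exact E_D_inv hb hadj hyi (by rintro rfl; exact hj hy) hzi (by rintro rfl; exact hj hz)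
      (Or.inr (((h1 y).1 hy).trans ((h1 z).1 hz).symm))
  · intro y z hy hz hyj hzj
    exact E_D_inv hb hadj (by rintro rfl; exact hy hi) hyj (by rintro rfl; exact hz hi) hzj
      (Or.inl (((h2 y).1 hy).trans ((h2 z).1 hz).symm))
  · intro u hu hui w
    have huj : u ≠ j := by rintro rfl; exact hj hu
    have := triangle hij.symm huj.symm hui.symm (E_inv hb ((h1 u).1 hu).symm) w
    rw [E_anti hb hadj, E_anti hb hadj, E_anti hb hadj, swap_comm i j, ← this]
    ring
  · intro u hu huj w
    have hui : u ≠ i := by rintro rfl; exact hu hi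
    exact triangle hij hui.symm huj.symm (E_inv hb ((h2 u).1 hu).symm) w

end Local

end LinSpl

namespace LinSpl

open Equiv

section Global

variable {n : ℕ} {Γ : SimpleGraph (Fin n)}

/-- The vertices on the `s.1`-side of the edge `s`. -/
noncomputable def LS (Γ : SimpleGraph (Fin n)) (s : Fin n × Fin n) : Finset (Fin n) :=
  (Set.toFinite {y | (Γ.deleteEdges {s(s.1, s.2)}).Reachable s.1 y}).toFinset

lemma mem_LS {s : Fin n × Fin n} {y : Fin n} :
    y ∈ LS Γ s ↔ (Γ.deleteEdges {s(s.1, s.2)}).Reachable s.1 y := by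
  simp [LS]

lemma card_LS (s : Fin n × Fin n) : (LS Γ s).card = mS Γ s :=
  (Set.ncard_eq_toFinset_card _ _).symm

lemma fst_mem_LS (s : Fin n × Fin n) : s.1 ∈ LS Γ s :=
  mem_LS.2 (SimpleGraph.Reachable.refl _)

/-- `w(L_s)` -/
noncomputable abbrev mvS (Γ : SimpleGraph (Fin n)) (s : Fin n × Fin n) (w : Perm (Fin n)) :
    {T : Finset (Fin n) // T.card = mS Γ s} := mv (LS Γ s) (card_LS s) w

open Classical in
/-- The contribution of a cut edge. -/
noncomputable def fL (Γ : SimpleGraph (Fin n)) (s : Fin n × Fin n) :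
    ({T : Finset (Fin n) // T.card = mS Γ s} → ℂ) →ₗ[ℂ] (Fin n → Perm (Fin n) → ℂ) :=
  LinearMap.pi fun p => LinearMap.pi fun w =>
    if p = s.1 then LinearMap.proj (mvS Γ s w)
    else if p = s.2 then - LinearMap.proj (mvS Γ s w) else 0

lemma fL_fst (s : Fin n × Fin n) (g) (w : Perm (Fin n)) : fL Γ s g s.1 w = g (mvS Γ s w) := by
  simp [fL]

lemma fL_snd {s : Fin n × Fin n} (hs : s.1 ≠ s.2) (g) (w : Perm (Fin n)) :
    fL Γ s g s.2 w = - g (mvS Γ s w) := by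
  simp [fL, hs.symm]

lemma fL_ne {s : Fin n × Fin n} (g) {p : Fin n} (h1 : p ≠ s.1) (h2 : p ≠ s.2)
    (w : Perm (Fin n)) : fL Γ s g p w = 0 := by
  simp [fL, h1, h2]

lemma fL_inv {s : Fin n × Fin n} (hs : s.1 ≠ s.2) (g) (p : Fin n) {i j : Fin n}
    (hadj : Γ.Adj i j) (hne : s(i, j) ≠ s(s.1, s.2)) : Inv (fL Γ s g p) i j := by
  have hr : (Γ.deleteEdges {s(s.1, s.2)}).Adj i j := by
    rw [SimpleGraph.deleteEdges_adj]
    exact ⟨hadj, hne⟩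
  have hm : i ∈ LS Γ s ↔ j ∈ LS Γ s := by
    rw [mem_LS, mem_LS]
    exact ⟨fun h => h.trans hr.reachable, fun h => h.trans hr.symm.reachable⟩
  intro w
  have he : mvS Γ s (w * swap i j) = mvS Γ s w := Subtype.ext (map_swap_mem hm w)
  by_cases h1 : p = s.1
  · subst h1; rw [fL_fst, fL_fst, he]
  by_cases h2 : p = s.2
  · subst h2; rw [fL_snd hs, fL_snd hs, he]
  rw [fL_ne g h1 h2, fL_ne g h1 h2]

lemma fL_mem {s : Fin n × Fin n} (hs : s.1 ≠ s.2) (g) : fL Γ s g ∈ ESub Γ := by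
  constructor
  · intro p i j hadj hpi hpj
    by_cases hne : s(i, j) = s(s.1, s.2)
    · rw [Sym2.eq_iff] at hne
      have h12 : p ≠ s.1 ∧ p ≠ s.2 := by
        rcases hne with ⟨rfl, rfl⟩ | ⟨rfl, rfl⟩
        · exact ⟨hpi, hpj⟩
        · exact ⟨hpj, hpi⟩
      intro w
      rw [fL_ne g h12.1 h12.2, fL_ne g h12.1 h12.2]
    · exact fL_inv hs g p hadj hne
  · intro i j hadj w
    by_cases hne : s(i, j) = s(s.1, s.2)
    · rw [Sym2.eq_iff] at hne
      rcases hne with ⟨rfl, rfl⟩ | ⟨rfl, rfl⟩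
      · rw [fL_fst, fL_fst, fL_snd hs, fL_snd hs]; ring
      · rw [fL_fst, fL_fst, fL_snd hs, fL_snd hs]; ring
    · rw [fL_inv hs g i hadj hne, fL_inv hs g j hadj hne]

/-- The vertices attached to `B` at `p`. -/
noncomputable def AS (Γ : SimpleGraph (Fin n)) (B : Set (Fin n)) (p : Fin n) : Finset (Fin n) :=
  (Set.toFinite {u | Att Γ B p u}).toFinset

lemma mem_AS {B : Set (Fin n)} {p u : Fin n} : u ∈ AS Γ B p ↔ Att Γ B p u := by simp [AS]

open Classical in
/-- The contribution of a big block. -/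
noncomputable def xL (Γ : SimpleGraph (Fin n)) (B : Set (Fin n)) :
    (Fin n → ℂ) →ₗ[ℂ] (Fin n → Perm (Fin n) → ℂ) :=
  LinearMap.pi fun p => LinearMap.pi fun w =>
    if p ∈ B then ∑ k ∈ (AS Γ B p).map w.toEmbedding, LinearMap.proj k else 0

lemma xL_mem' {B : Set (Fin n)} (x) {p : Fin n} (hp : p ∈ B) (w : Perm (Fin n)) :
    xL Γ B x p w = ∑ k ∈ (AS Γ B p).map w.toEmbedding, x k := by
  simp [xL, hp]

lemma xL_notMem {B : Set (Fin n)} (x) {p : Fin n} (hp : p ∉ B) (w : Perm (Fin n)) :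
    xL Γ B x p w = 0 := by
  simp [xL, hp]

lemma xL_inv {B : Set (Fin n)} (x) {p i j : Fin n} (h : p ∈ B → (Att Γ B p i ↔ Att Γ B p j)) :
    Inv (xL Γ B x p) i j := by
  intro w
  by_cases hp : p ∈ B
  · rw [xL_mem' x hp, xL_mem' x hp, map_swap_mem]
    rw [mem_AS, mem_AS]; exact h hp
  · rw [xL_notMem x hp, xL_notMem x hp]

lemma xL_in {B : Set (Fin n)} (x) {i j : Fin n} (hi : i ∈ B) (hj : j ∈ B) (hij : i ≠ j)
    (w : Perm (Fin n)) :
    xL Γ B x i w - xL Γ B x i (w * swap i j) = x (w i) - x (w j) := by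
  have h1 : i ∈ AS Γ B i := mem_AS.2 (Or.inl rfl)
  have h2 : j ∉ AS Γ B i := by rw [mem_AS, Att_mem hj]; exact hij.symm
  rw [xL_mem' x hi, xL_mem' x hi, map_swap_cut h1 h2, Finset.sum_insert]
  · have := Finset.add_sum_erase ((AS Γ B i).map w.toEmbedding) x (a := w i) (by simp [h1])
    rw [← this]; ring
  · simp [h2]

lemma xL_out [NeZero n] (hΓ : Γ.Connected) {B : Set (Fin n)} (hB : IsMC Γ B) (x) {i j : Fin n}
    (hadj : Γ.Adj i j) (h : ¬ (i ∈ B ∧ j ∈ B)) : Inv (xL Γ B x i) i j := by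
  apply xL_inv
  intro hi
  exact iff_of_true (Or.inl rfl) (Att_edge_out hΓ hB hi (fun hj => h ⟨hi, hj⟩) hadj)

lemma xL_mem [NeZero n] (hΓ : Γ.Connected) {B : Set (Fin n)} (hB : IsMC Γ B) (x) :
    xL Γ B x ∈ ESub Γ := by
  constructor
  · intro p i j hadj hpi hpj
    apply xL_inv
    intro _
    exact Att_congr (RA_adj hadj hpi.symm hpj.symm) hpi.symm
  · intro i j hadj w
    by_cases h : i ∈ B ∧ j ∈ B
    · have e1 := xL_in (Γ := Γ) x h.1 h.2 hadj.ne w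
      have e2 := xL_in (Γ := Γ) x h.2 h.1 hadj.ne.symm w
      rw [swap_comm] at e2
      linear_combination - e1 - e2
    · have e1 := xL_out hΓ hB x hadj h w
      have e2 := xL_out hΓ hB x hadj.symm (fun h' => h h'.symm) w
      rw [swap_comm] at e2
      rw [e1, e2]

/-- The parameter space. -/
abbrev MM (Γ : SimpleGraph (Fin n)) : Type :=
  (Fin n → ℂ) × ((s : {s // s ∈ cutS Γ}) → ({T : Finset (Fin n) // T.card = mS Γ s.1} → ℂ)) ×
    ({B // B ∈ bigs Γ} → Fin n → ℂ)

/-- The constant part of the parametrization. -/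
noncomputable def cL (n : ℕ) : (Fin n → ℂ) →ₗ[ℂ] (Fin n → Perm (Fin n) → ℂ) :=
  LinearMap.pi fun p => LinearMap.pi fun _ => LinearMap.proj p

/-- The cut edge part of the parametrization. -/
noncomputable def fSum (Γ : SimpleGraph (Fin n)) :
    ((s : {s // s ∈ cutS Γ}) → ({T : Finset (Fin n) // T.card = mS Γ s.1} → ℂ)) →ₗ[ℂ]
      (Fin n → Perm (Fin n) → ℂ) :=
  ∑ s : {s // s ∈ cutS Γ}, (fL Γ s.1).comp (LinearMap.proj s)

/-- The big block part of the parametrization. -/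
noncomputable def xSum (Γ : SimpleGraph (Fin n)) :
    ({B // B ∈ bigs Γ} → Fin n → ℂ) →ₗ[ℂ] (Fin n → Perm (Fin n) → ℂ) :=
  ∑ B : {B // B ∈ bigs Γ}, (xL Γ B.1).comp (LinearMap.proj B)

/-- The parametrization. -/
noncomputable def Phi (Γ : SimpleGraph (Fin n)) : MM Γ →ₗ[ℂ] (Fin n → Perm (Fin n) → ℂ) :=
  (cL n).coprod ((fSum Γ).coprod (xSum Γ))

lemma Phi_eq (m : MM Γ) : Phi Γ m = (fun p _ => m.1 p) +
    (∑ s : {s // s ∈ cutS Γ}, fL Γ s.1 (m.2.1 s) +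
      ∑ B : {B // B ∈ bigs Γ}, xL Γ B.1 (m.2.2 B)) := by
  simp only [Phi, LinearMap.coprod_apply, fSum, xSum, LinearMap.sum_apply, LinearMap.comp_apply,
    LinearMap.proj_apply]
  rfl

lemma Phi_apply (β : Fin n → ℂ)
    (f : (s : {s // s ∈ cutS Γ}) → ({T : Finset (Fin n) // T.card = mS Γ s.1} → ℂ))
    (x : {B // B ∈ bigs Γ} → Fin n → ℂ) (p : Fin n) (w : Perm (Fin n)) :
    Phi Γ (β, f, x) p w = β p + ∑ s : {s // s ∈ cutS Γ}, fL Γ s.1 (f s) p w +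
      ∑ B : {B // B ∈ bigs Γ}, xL Γ B.1 (x B) p w := by
  rw [Phi_eq]
  simp only [Pi.add_apply, Finset.sum_apply, add_assoc]

lemma const_mem (β : Fin n → ℂ) : (fun p (_ : Perm (Fin n)) => β p) ∈ ESub Γ :=
  ⟨fun _ _ _ _ _ _ _ => rfl, fun _ _ _ _ => rfl⟩

lemma cut_ne (s : {s // s ∈ cutS Γ}) : s.1.1 ≠ s.1.2 := (mem_cutS.1 s.2).1.ne

lemma mem_bigs {B : Set (Fin n)} : B ∈ bigs Γ ↔ IsMC Γ B ∧ 2 < B.ncard := by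
  simp [bigs, mem_bl]

lemma Phi_mem [NeZero n] (hΓ : Γ.Connected) (m : MM Γ) : Phi Γ m ∈ ESub Γ := by
  rw [Phi_eq]
  refine Submodule.add_mem _ (const_mem _) (Submodule.add_mem _ ?_ ?_)
  · exact Submodule.sum_mem _ fun s _ => fL_mem (cut_ne s) _
  · exact Submodule.sum_mem _ fun B _ => xL_mem hΓ (mem_bigs.1 B.2).1 _

lemma Phi_D (β : Fin n → ℂ)
    (f : (s : {s // s ∈ cutS Γ}) → ({T : Finset (Fin n) // T.card = mS Γ s.1} → ℂ))
    (x : {B // B ∈ bigs Γ} → Fin n → ℂ) (i j : Fin n) (w : Perm (Fin n)) :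
    Phi Γ (β, f, x) i w - Phi Γ (β, f, x) i (w * swap i j) =
      ∑ s : {s // s ∈ cutS Γ}, (fL Γ s.1 (f s) i w - fL Γ s.1 (f s) i (w * swap i j)) +
      ∑ B : {B // B ∈ bigs Γ}, (xL Γ B.1 (x B) i w - xL Γ B.1 (x B) i (w * swap i j)) := by
  rw [Phi_apply, Phi_apply, Finset.sum_sub_distrib, Finset.sum_sub_distrib]; ring

lemma Phi_D_big [NeZero n] (hΓ : Γ.Connected) (β : Fin n → ℂ)
    (f : (s : {s // s ∈ cutS Γ}) → ({T : Finset (Fin n) // T.card = mS Γ s.1} → ℂ))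
    (x : {B // B ∈ bigs Γ} → Fin n → ℂ) {i j : Fin n} (hadj : Γ.Adj i j)
    (B : {B // B ∈ bigs Γ}) (hi : i ∈ B.1) (hj : j ∈ B.1) (w : Perm (Fin n)) :
    Phi Γ (β, f, x) i w - Phi Γ (β, f, x) i (w * swap i j) = x B (w i) - x B (w j) := by
  rw [Phi_D]
  have hB := mem_bigs.1 B.2
  rw [Finset.sum_eq_zero, Finset.sum_eq_single B, zero_add, xL_in _ hi hj hadj.ne]
  · intro B' _ hne
    rw [xL_out hΓ (mem_bigs.1 B'.2).1 _ hadj, sub_self]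
    rintro ⟨hi', hj'⟩
    exact hne (Subtype.ext ((mem_bigs.1 B'.2).1.eq_of_two hB.1 hadj.ne hi' hj' hi hj))
  · intro h; exact absurd (Finset.mem_univ _) h
  · intro s _
    rw [fL_inv (cut_ne s) _ _ hadj, sub_self]
    intro he
    have hs := (mem_cutS.1 s.2).2
    have h12 : s.1.1 ∈ B.1 ∧ s.1.2 ∈ B.1 := by
      rcases Sym2.eq_iff.1 he with ⟨rfl, rfl⟩ | ⟨rfl, rfl⟩
      · exact ⟨hi, hj⟩
      · exact ⟨hj, hi⟩
    have := cut_block hΓ hs hB.1 h12.1 h12.2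
    have h2 := hB.2
    rw [this, Set.ncard_pair (cut_ne s)] at h2
    omega

lemma Phi_D_cut [NeZero n] (hΓ : Γ.Connected) (β : Fin n → ℂ)
    (f : (s : {s // s ∈ cutS Γ}) → ({T : Finset (Fin n) // T.card = mS Γ s.1} → ℂ))
    (x : {B // B ∈ bigs Γ} → Fin n → ℂ) (s : {s // s ∈ cutS Γ})
    (w : Perm (Fin n)) :
    Phi Γ (β, f, x) s.1.1 w - Phi Γ (β, f, x) s.1.1 (w * swap s.1.1 s.1.2) =
      f s (mvS Γ s.1 w) - f s (mvS Γ s.1 (w * swap s.1.1 s.1.2)) := by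
  have hs := mem_cutS.1 s.2
  rw [Phi_D, Finset.sum_eq_single s, add_eq_left.2, fL_fst, fL_fst]
  · refine Finset.sum_eq_zero fun B _ => ?_
    have hB := mem_bigs.1 B.2
    rw [xL_out hΓ hB.1 _ hs.2.1, sub_self]
    rintro ⟨hi, hj⟩
    have := cut_block hΓ hs.2 hB.1 hi hj
    have h2 := hB.2
    rw [this, Set.ncard_pair (cut_ne s)] at h2
    omega
  · intro s' _ hne
    rw [fL_inv (cut_ne s') _ _ hs.2.1, sub_self]
    intro he
    have hs' := mem_cutS.1 s'.2
    apply hne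
    apply Subtype.ext
    rcases Sym2.eq_iff.1 he with ⟨h1, h2⟩ | ⟨h1, h2⟩
    · exact Prod.ext h1.symm h2.symm
    · have a := hs.1
      rw [h1, h2] at a
      exact absurd a (not_lt.2 hs'.1.le)
  · intro h; exact absurd (Finset.mem_univ _) h

/-- The bijection. -/
noncomputable def Psi [NeZero n] (hΓ : Γ.Connected) :
    MM Γ →ₗ[ℂ] (ESub Γ × ({s // s ∈ cutS Γ} → ℂ) × ({B // B ∈ bigs Γ} → ℂ)) where
  toFun m := (⟨Phi Γ m, Phi_mem hΓ m⟩, fun s => m.2.1 s (mvS Γ s.1 1), fun B => m.2.2 B 0)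
  map_add' a b := by
    refine Prod.ext (Subtype.ext ?_) rfl
    exact map_add _ _ _
  map_smul' c a := by
    refine Prod.ext (Subtype.ext ?_) rfl
    exact map_smul _ _ _

lemma cut_const [NeZero n] (hΓ : Γ.Connected) (s : {s // s ∈ cutS Γ})
    (g : {T : Finset (Fin n) // T.card = mS Γ s.1} → ℂ)
    (hg : ∀ w, g (mvS Γ s.1 w) = g (mvS Γ s.1 (w * swap s.1.1 s.1.2))) (T) :
    g T = g (mvS Γ s.1 1) := by
  obtain ⟨w, hw⟩ := exists_perm_map (L := LS Γ s.1) (T := T.1) (T.2.trans (card_LS s.1).symm)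
  have e : T = mvS Γ s.1 w := Subtype.ext hw.symm
  rw [e]
  refine Inv.const (F := fun w => g (mvS Γ s.1 w)) hΓ ?_ w 1
  intro i j hadj w
  have hs := cut_ne s
  have key : Inv (fL Γ s.1 g s.1.1) i j := by
    by_cases hne : s(i, j) = s(s.1.1, s.1.2)
    · have hsw : swap i j = swap s.1.1 s.1.2 := by
        rcases Sym2.eq_iff.1 hne with ⟨rfl, rfl⟩ | ⟨rfl, rfl⟩
        · rfl
        · exact swap_comm _ _
      intro w
      rw [fL_fst, fL_fst, hsw, ← hg]
    · exact fL_inv hs g _ hadj hne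
  have := key w
  rwa [fL_fst, fL_fst] at this

lemma big_adj [NeZero n] (hn : 2 ≤ n) (hΓ : Γ.Connected) {B : Set (Fin n)} (hB : IsMC Γ B) :
    ∃ i j, i ∈ B ∧ j ∈ B ∧ Γ.Adj i j := by
  obtain ⟨-, hcon, -⟩ := hB.biconn hn hΓ
  obtain ⟨i, hi⟩ := hB.nonempty
  obtain ⟨v, hv, hvi, -⟩ := exists_other hn hΓ hB i
  obtain ⟨p⟩ := hcon.preconnected ⟨i, hi⟩ ⟨v, hv⟩
  cases p with
  | nil => exact absurd rfl hvi
  | cons ha _ => exact ⟨i, _, hi, Subtype.prop _, ha⟩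

lemma Psi_inj [NeZero n] (hn : 2 ≤ n) (hΓ : Γ.Connected) : Function.Injective (Psi hΓ) := by
  rw [injective_iff_map_eq_zero]
  rintro ⟨β, f, x⟩ h
  have h1 : Phi Γ (β, f, x) = 0 := congrArg (fun z => (z.1 : Fin n → Perm (Fin n) → ℂ)) h
  have h2 : ∀ s, f s (mvS Γ s.1 1) = 0 := fun s => congrFun (congrArg (fun z => z.2.1) h) s
  have h3 : ∀ B, x B 0 = 0 := fun B => congrFun (congrArg (fun z => z.2.2) h) B
  have hf : f = 0 := by
    funext s T
    rw [cut_const hΓ s (f s) ?_ T, h2]; · rfl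
    intro w
    have := Phi_D_cut hΓ β f x s w
    rw [h1] at this
    simp only [Pi.zero_apply, sub_self] at this
    exact sub_eq_zero.1 this.symm
  have hx : x = 0 := by
    funext B k
    have hB := mem_bigs.1 B.2
    obtain ⟨i, j, hi, hj, hadj⟩ := big_adj hn hΓ hB.1
    by_cases hk : k = 0
    · rw [hk, h3]; rfl
    obtain ⟨w, -, hw1, hw2⟩ := exists_perm_map2 (L := {i}) (T := {k}) (by simp) (i := i) (j := j)
      (x := k) (y := 0) (by simp) (by simpa using hadj.ne.symm) (by simp) (by simpa using Ne.symm hk)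
    have := Phi_D_big hΓ β f x hadj B hi hj w
    rw [h1, hw1, hw2, h3] at this
    simp only [Pi.zero_apply, sub_self, sub_zero] at this
    rw [← this]; rfl
  subst hf hx
  have hβ : β = 0 := by
    funext p
    have := Phi_apply (Γ := Γ) β 0 0 p 1
    rw [h1] at this
    simpa using this.symm
  subst hβ
  rfl

lemma Psi_surj [NeZero n] (hn : 2 ≤ n) (hΓ : Γ.Connected) : Function.Surjective (Psi hΓ) := by
  rintro ⟨⟨b, hb⟩, a, y⟩
  have hcut : ∀ s : {s // s ∈ cutS Γ}, ∃ g : {T : Finset (Fin n) // T.card = mS Γ s.1} → ℂ,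
      g (mvS Γ s.1 1) = a s ∧ ∀ w, b s.1.1 w - b s.1.1 (w * swap s.1.1 s.1.2) =
        g (mvS Γ s.1 w) - g (mvS Γ s.1 (w * swap s.1.1 s.1.2)) := by
    intro s
    obtain ⟨g, hg⟩ := cut_exists hΓ hb (mem_cutS.1 s.2).2 (LS Γ s.1) (card_LS s.1)
      (fun y => mem_LS)
    refine ⟨fun T => g T - g (mvS Γ s.1 1) + a s, by ring, fun w => ?_⟩
    rw [hg]; ring
  have hbig : ∀ B : {B // B ∈ bigs Γ}, ∃ x : Fin n → ℂ, x 0 = y B ∧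
      ∀ i j, i ∈ B.1 → j ∈ B.1 → Γ.Adj i j → ∀ w,
        b i w - b i (w * swap i j) = x (w i) - x (w j) := by
    intro B
    have hB := mem_bigs.1 B.2
    obtain ⟨x, hx⟩ := big_exists hn hΓ hb hB.1 hB.2
    refine ⟨fun k => x k - x 0 + y B, by ring, fun i j hi hj hij w => ?_⟩
    rw [hx i j hi hj hij]; ring
  choose f hf0 hf using hcut
  choose x hx0 hx using hbig
  set b' : Fin n → Perm (Fin n) → ℂ := b - Phi Γ (0, f, x) with hb'
  have hb'E : b' ∈ ESub Γ := Submodule.sub_mem _ hb (Phi_mem hΓ _)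
  have hcutD : ∀ s : {s // s ∈ cutS Γ}, ∀ w,
      b' s.1.1 w - b' s.1.1 (w * swap s.1.1 s.1.2) = 0 := by
    intro s w
    have e1 := hf s w
    have e2 := Phi_D_cut hΓ 0 f x s w
    simp only [hb', Pi.sub_apply]
    linear_combination e1 - e2
  have hD : ∀ i j, Γ.Adj i j → ∀ w, b' i w - b' i (w * swap i j) = 0 := by
    intro i j hadj w
    obtain ⟨B, hB, hi, hj⟩ := exists_edge_block hadj
    by_cases h2 : 2 < B.ncard
    · have e1 := hx ⟨B, mem_bigs.2 ⟨hB, h2⟩⟩ i j hi hj hadj w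
      have e2 := Phi_D_big hΓ 0 f x hadj ⟨B, mem_bigs.2 ⟨hB, h2⟩⟩ hi hj w
      simp only [hb', Pi.sub_apply]
      linear_combination e1 - e2
    · have hBe : B = {i, j} := by
        symm
        apply Set.eq_of_subset_of_ncard_le
        · rintro z (rfl | rfl)
          · exact hi
          · exact hj
        · rw [Set.ncard_pair hadj.ne]; omega
        · exact Set.toFinite _
      subst hBe
      rcases lt_or_gt_of_ne hadj.ne with hlt | hlt
      · exact hcutD ⟨(i, j), mem_cutS.2 ⟨hlt, isCutEdge_of_block hn hΓ hadj.ne hB⟩⟩ w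
      · rw [Set.pair_comm] at hB
        have := hcutD ⟨(j, i), mem_cutS.2 ⟨hlt, isCutEdge_of_block hn hΓ hadj.ne.symm hB⟩⟩ w
        simp only at this
        rw [swap_comm] at this
        rw [E_anti hb'E hadj, this, neg_zero]
  have hconst : ∀ p w, b' p w = b' p 1 := by
    intro p w
    refine Inv.const (F := b' p) hΓ ?_ w 1
    intro i j hadj w
    by_cases hpi : p = i
    · subst hpi; exact (sub_eq_zero.1 (hD p j hadj w)).symm
    by_cases hpj : p = j
    · subst hpj
      rw [swap_comm]
      exact (sub_eq_zero.1 (hD p i hadj.symm w)).symm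
    exact hb'E.1 p i j hadj hpi hpj w
  refine ⟨(fun p => b' p 1, f, x), ?_⟩
  refine Prod.ext (Subtype.ext ?_) (Prod.ext (funext hf0) (funext hx0))
  change Phi Γ (fun p => b' p 1, f, x) = b
  funext p w
  have e1 := Phi_apply (Γ := Γ) (fun p => b' p 1) f x p w
  have e2 := Phi_apply (Γ := Γ) 0 f x p w
  have e3 := hconst p w
  have e4 : b' p w = b p w - Phi Γ (0, f, x) p w := rfl
  simp only [Pi.zero_apply] at e2
  linear_combination e1 - e2 - e3 + e4

lemma finrank_E [NeZero n] (hn : 2 ≤ n) (hΓ : Γ.Connected) :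
    Module.finrank ℂ (ESub Γ) + (cutS Γ).card + (bigs Γ).card =
      n + ∑ p ∈ cutS Γ, n.choose (mS Γ p) + n * (bigs Γ).card := by
  have hx : Module.finrank ℂ ({B // B ∈ bigs Γ} → Fin n → ℂ) = (bigs Γ).card * n := by
    rw [Module.finrank_pi_fintype]
    simp
  have hf : Module.finrank ℂ ((s : {s // s ∈ cutS Γ}) →
      ({T : Finset (Fin n) // T.card = mS Γ s.1} → ℂ)) = ∑ p ∈ cutS Γ, n.choose (mS Γ p) := by
    rw [Module.finrank_pi_fintype, ← Finset.sum_coe_sort (cutS Γ) (fun p => n.choose (mS Γ p))]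
    simp
  have h := (LinearEquiv.ofBijective (Psi hΓ) ⟨Psi_inj hn hΓ, Psi_surj hn hΓ⟩).finrank_eq
  rw [Module.finrank_prod, Module.finrank_prod, Module.finrank_prod, Module.finrank_prod,
    hx, hf] at h
  simp only [Module.finrank_fintype_fun_eq_card, Fintype.card_fin, Fintype.card_coe] at h
  rw [mul_comm n]
  omega

end Global

end LinSpl

/-- For a connected graph `Γ` on `[n]` with `n ≥ 3`, the `ℂ`-dimension of the space of
linear splines `Splines(Γ)¹` equals the combinatorial invariant `D_Γ`. -/
theorem finrank_linSplines_eq_Dinv {n : ℕ} (hn : 3 ≤ n)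
    (Γ : SimpleGraph (Fin n)) (hΓ : Γ.Connected) :
    (Module.finrank ℂ ↥(linSplines Γ) : ℤ) = Dinv Γ := by
  haveI : NeZero n := ⟨by omega⟩
  have h1 := LinSpl.Dinv_eq hn hΓ
  have h2 := LinSpl.finrank_E (by omega : 2 ≤ n) hΓ
  have h3 : ((Module.finrank ℂ (LinSpl.ESub Γ) + (LinSpl.cutS Γ).card + (LinSpl.bigs Γ).card : ℕ)
      : ℤ) = ((n + ∑ p ∈ LinSpl.cutS Γ, n.choose (LinSpl.mS Γ p) +
        n * (LinSpl.bigs Γ).card : ℕ) : ℤ) := by rw [h2]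
  push_cast at h3
  rw [LinSpl.finrank_linSplines]
  linarith
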